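/- Every finite simple connected graph in which each block is a cycle, a single edge, or a biconnected chordal graph satisfies the substructure property. -/

import Mathlib

/-!
Let `G` be one component of an extension at `x`. Root `G` at `x` and recurse over its blocks. A
branch `S` attached at `y` gets a number `a` for which two things hold. Whatever defends the whole
graph always has at least `a` guards on `S` besides those at `y`; and `a` guards, one more at `y`
and one further guard defend `S` in such a way that the further guard can be lent at `y` to the rest
of the graph whenever it is asked for. The two bounds are proved together. If `y` is unoccupied, an
attack on an edge from `y` into `S` forces a guard out of `S \ {y}`, so there are always at least
`a + 1` guards on `S`.

For the branch at the root `x` of a block `B`, let the branch at a vertex `b ≠ x` of `B` have `d b`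
guards in excess of its number `a b`. By the same forcing argument `d` is at least one at every
proper branch, covers the edges of `B` that avoid `x`, and is at least two somewhere on every set of
branches whose neighbourhood in `B` is unoccupied. It remains to play on `B` alone, with one guard
that can be lent at any of the attaching vertices, and with `2 + ∑ d` guards at most. If the vertex
covers of `B` are connected, as in an edge or a chordal block, then a cover and one more guard that
wanders through it suffice. On a cycle, one walks around waiting at every attaching vertex and, if
necessary, once more to make the length odd; if this closed walk has length `2 k + 1`, then `k + 1`
guards on alternate positions suffice.

At the root of `G` this gives `evc_x(G) ≤ a + 2` and, putting the lent guard on the pendant vertex,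
`evc(G_x^+) ≤ a + 2`, against at least `a + 1` guards on `G` in any defense of an extension.
-/

open SimpleGraph

namespace EVC

variable {V : Type}

/-- `S` is a vertex cover of `G`. -/
def IsCover (G : SimpleGraph V) (S : Set V) : Prop :=
  ∀ ⦃u v : V⦄, G.Adj u v → u ∈ S ∨ v ∈ S

/-- A valid movement of guards from configuration `C` to configuration `C'`, witnessed by a
multiset `M` of (source, target) pairs (a bijection between the two multisets of guards):
every guard either stays in place or moves to an adjacent vertex. -/
def ValidMove (G : SimpleGraph V) (C C' : Multiset V) (M : Multiset (V × V)) : Prop :=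
  M.map Prod.fst = C ∧ M.map Prod.snd = C' ∧ ∀ p ∈ M, p.1 = p.2 ∨ G.Adj p.1 p.2

/-- A defense strategy on `G` with `k` guards: a nonempty family of vertex-cover
configurations of size `k` such that any attack on an edge can be defended by a valid
move staying within the family. -/
def IsDefense (G : SimpleGraph V) (k : ℕ) (F : Set (Multiset V)) : Prop :=
  F.Nonempty ∧
  (∀ C ∈ F, Multiset.card C = k ∧ IsCover G {v | v ∈ C}) ∧
  (∀ C ∈ F, ∀ u v : V, G.Adj u v →
    ∃ C' ∈ F, ∃ M : Multiset (V × V), ValidMove G C C' M ∧ ((u, v) ∈ M ∨ (v, u) ∈ M))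

/-- The eternal vertex cover number of `G`. -/
noncomputable def evc (G : SimpleGraph V) : ℕ :=
  sInf {k | ∃ F : Set (Multiset V), IsDefense G k F}

/-- `evc_S(G)`: the minimum number of guards of a defense strategy on `G` in which every
vertex of `S` is occupied in every configuration. -/
noncomputable def evcOn (G : SimpleGraph V) (S : Set V) : ℕ :=
  sInf {k | ∃ F : Set (Multiset V), IsDefense G k F ∧ ∀ C ∈ F, ∀ s ∈ S, s ∈ C}

/-- `C` is an eternal vertex cover configuration of `G`: it belongs to some defense strategy. -/
def IsEvcConfig (G : SimpleGraph V) (C : Multiset V) : Prop :=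
  ∃ (k : ℕ) (F : Set (Multiset V)), IsDefense G k F ∧ C ∈ F

open Classical in
/-- The number of guards of configuration `C` that lie in the set `S`. -/
noncomputable def guardsOn (C : Multiset V) (S : Set V) : ℕ :=
  Multiset.card (C.filter (fun v => v ∈ S))

/-- `G_x^+`: the graph `G` together with one new vertex (`none`) adjacent only to `x`. -/
def addPendant (G : SimpleGraph V) (x : V) : SimpleGraph (Option V) :=
  SimpleGraph.fromRel (fun a b =>
    (∃ u w : V, a = some u ∧ b = some w ∧ G.Adj u w) ∨ (a = none ∧ b = some x))

/-- The induced subgraph of `G` obtained by deleting the vertex `x`. -/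
abbrev delVert (G : SimpleGraph V) (x : V) : SimpleGraph {v : V | v ≠ x} :=
  G.induce {v : V | v ≠ x}

/-- `x` is a cut vertex of `G`: deleting `x` separates two vertices that were connected. -/
def IsCutVertex (G : SimpleGraph V) (x : V) : Prop :=
  ∃ (u v : V) (hu : u ≠ x) (hv : v ≠ x), G.Reachable u v ∧
    ¬ (delVert G x).Reachable ⟨u, hu⟩ ⟨v, hv⟩

/-- `G` is Type 1 with respect to `x`: `evc(G_x^+) = evc_x(G)`. -/
def Type1 (G : SimpleGraph V) (x : V) : Prop := evc (addPendant G x) = evcOn G {x}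

/-- `G` is Type 2 with respect to `x`: `evc(G_x^+) > evc_x(G)`. -/
def Type2 (G : SimpleGraph V) (x : V) : Prop := evcOn G {x} < evc (addPendant G x)

/-- The vertex set of the `x`-component of `G` corresponding to the connected component `H`
of `G − x`: the vertices of `H` together with `x`. -/
def xCompSet (G : SimpleGraph V) (x : V) (H : (delVert G x).ConnectedComponent) : Set V :=
  insert x (Subtype.val '' H.supp)

lemma x_mem_xCompSet (G : SimpleGraph V) (x : V) (H : (delVert G x).ConnectedComponent) :
    x ∈ xCompSet G x H := Set.mem_insert _ _

/-- `evc_x(G_i)` for the `x`-component `G_i` of `G` corresponding to `H`. -/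
noncomputable def evcComp (G : SimpleGraph V) (x : V)
    (H : (delVert G x).ConnectedComponent) : ℕ :=
  evcOn (G.induce (xCompSet G x H)) {(⟨x, x_mem_xCompSet G x H⟩ : ↥(xCompSet G x H))}

/-- The `x`-component of `G` corresponding to `H` is Type 1 with respect to `x`. -/
def CompType1 (G : SimpleGraph V) (x : V) (H : (delVert G x).ConnectedComponent) : Prop :=
  Type1 (G.induce (xCompSet G x H)) ⟨x, x_mem_xCompSet G x H⟩

/-- The `x`-component of `G` corresponding to `H` is Type 2 with respect to `x`. -/
def CompType2 (G : SimpleGraph V) (x : V) (H : (delVert G x).ConnectedComponent) : Prop :=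
  Type2 (G.induce (xCompSet G x H)) ⟨x, x_mem_xCompSet G x H⟩

/-- The substructure property: for every non-cut vertex `x` of `G` and every `x`-extension
`G'` of `G` (i.e. every connected graph `G'` having `G` as an `x`-component, via an
isomorphism `φ` identifying `x` with a cut vertex `x'` of `G'`), every eternal vertex cover
configuration of `G'` has at least `evc_x(G) − 1` guards on the copy of `V(G)` in case
`evc(G_x^+) ≤ evc_x(G)`, and at least `evc_x(G)` guards on it in case
`evc(G_x^+) > evc_x(G)`. -/
def SubstructureProperty (G : SimpleGraph V) : Prop :=
  ∀ x : V, ¬ IsCutVertex G x →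
  ∀ (V' : Type) [Finite V'], ∀ (G' : SimpleGraph V') (x' : V'),
    G'.Connected → IsCutVertex G' x' →
  ∀ (H : (delVert G' x').ConnectedComponent) (φ : G ≃g G'.induce (xCompSet G' x' H)),
    (φ x : ↥(xCompSet G' x' H)).1 = x' →
  ∀ C' : Multiset V', IsEvcConfig G' C' →
    (evc (addPendant G x) ≤ evcOn G {x} →
        evcOn G {x} - 1 ≤ guardsOn C' (xCompSet G' x' H)) ∧
    (evcOn G {x} < evc (addPendant G x) →
        evcOn G {x} ≤ guardsOn C' (xCompSet G' x' H))

/-- The `x`-component corresponding to `H` is edge-disjoint from (the induced subgraph on)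
the vertex set `S`. -/
def EdgeDisjointComp (G : SimpleGraph V) (S : Set V) (x : V)
    (H : (delVert G x).ConnectedComponent) : Prop :=
  ∀ u v : V, G.Adj u v → u ∈ S → v ∈ S →
    ¬(u ∈ xCompSet G x H ∧ v ∈ xCompSet G x H)

/-- The components attached to the vertex set `S` (of a block or a path): pairs `(x, H)`
with `x ∈ X ∩ S` a cut vertex on `S` and `H` a component of `G − x` whose `x`-component
is edge-disjoint from `S`. -/
def SComponents (G : SimpleGraph V) (X S : Set V) :
    Set (Σ x : V, (delVert G x).ConnectedComponent) :=
  {p | p.1 ∈ X ∧ p.1 ∈ S ∧ EdgeDisjointComp G S p.1 p.2}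

/-- `χ(G, S)` where `S` is the vertex set of a block or a path of `G` and `X` is the set
of cut vertices of `G`. -/
noncomputable def chi (G : SimpleGraph V) (X S : Set V) : ℕ :=
  Nat.card ↥(S ∩ X)
    + ∑ᶠ p ∈ {p ∈ SComponents G X S | CompType1 G p.1 p.2}, (evcComp G p.1 p.2 - 2)
    + ∑ᶠ p ∈ {p ∈ SComponents G X S | CompType2 G p.1 p.2}, (evcComp G p.1 p.2 - 1)

/-- The set `S` induces a block of `G`: a maximal (vertex set of a) connected induced
subgraph having no cut vertex. -/
def IsBlock (G : SimpleGraph V) (S : Set V) : Prop :=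
  (G.induce S).Connected ∧ (∀ y : ↥S, ¬ IsCutVertex (G.induce S) y) ∧
  ∀ T : Set V, S ⊆ T → (G.induce T).Connected →
    (∀ y : ↥T, ¬ IsCutVertex (G.induce T) y) → T ⊆ S

/-- The induced subgraph of `G` on `S` is a cycle: there is a chordless cycle of `G` whose
vertex set is exactly `S`. -/
def IsCycleSet (G : SimpleGraph V) (S : Set V) : Prop :=
  ∃ (a : V) (c : G.Walk a a), c.IsCycle ∧ S = {v | v ∈ c.support} ∧
    ∀ u v : V, u ∈ c.support → v ∈ c.support → G.Adj u v → s(u, v) ∈ c.edges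

/-- `G` is chordal: every cycle of length at least four has a chord. -/
def IsChordal (G : SimpleGraph V) : Prop :=
  ∀ (a : V) (c : G.Walk a a), c.IsCycle → 4 ≤ c.length →
    ∃ u v : V, u ∈ c.support ∧ v ∈ c.support ∧ G.Adj u v ∧ s(u, v) ∉ c.edges

/-- `G` is biconnected (2-connected): connected, at least three vertices, no cut vertex. -/
def IsBiconnected (G : SimpleGraph V) : Prop :=
  G.Connected ∧ 3 ≤ Nat.card V ∧ ∀ x : V, ¬ IsCutVertex G x

/-- `G` is a cactus: connected, and any two distinct simple cycles share at most one vertex. -/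
def IsCactus (G : SimpleGraph V) : Prop :=
  G.Connected ∧
  ∀ (a b : V) (c₁ : G.Walk a a) (c₂ : G.Walk b b), c₁.IsCycle → c₂.IsCycle →
    {e | e ∈ c₁.edges} ≠ {e | e ∈ c₂.edges} →
    {v | v ∈ c₁.support ∧ v ∈ c₂.support}.Subsingleton

/-- `mvc_S(G)`: minimum cardinality of a vertex cover of `G` containing all vertices of `S`. -/
noncomputable def mvcOn (G : SimpleGraph V) (S : Set V) : ℕ :=
  sInf {k | ∃ T : Set V, IsCover G T ∧ S ⊆ T ∧ Nat.card ↥T = k}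

/-- `P` is an induced path of `G`. -/
def IsInducedPath (G : SimpleGraph V) {a b : V} (P : G.Walk a b) : Prop :=
  P.IsPath ∧ ∀ u v : V, u ∈ P.support → v ∈ P.support → G.Adj u v → s(u, v) ∈ P.edges

/-- `P` is obtained by removing one edge from an induced cycle of `G`. -/
def IsInducedCycleMinusEdge (G : SimpleGraph V) {a b : V} (P : G.Walk a b) : Prop :=
  P.IsPath ∧ 2 ≤ P.length ∧ G.Adj a b ∧
    ∀ u v : V, u ∈ P.support → v ∈ P.support → G.Adj u v →
      (s(u, v) ∈ P.edges ∨ s(u, v) = s(a, b))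

open Classical in
/-- `P` is an eventful path of `G` (with `X` the set of cut vertices of `G`): it is an
induced path or an induced cycle minus an edge, its endpoints lie in `X`, and every
(contiguous) subpath of `P` with both endpoints in `X` has an even number of vertices
outside `X`. -/
def Eventful (G : SimpleGraph V) (X : Set V) {a b : V} (P : G.Walk a b) : Prop :=
  (IsInducedPath G P ∨ IsInducedCycleMinusEdge G P) ∧ a ∈ X ∧ b ∈ X ∧
    ∀ i j : Fin P.support.length, (i : ℕ) ≤ (j : ℕ) →
      P.support.get i ∈ X → P.support.get j ∈ X →
      Even (Multiset.countP (fun v => v ∉ X)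
        (((P.support.drop (i : ℕ)).take ((j : ℕ) - (i : ℕ) + 1) : List V) : Multiset V))

/-- The vertex bunch `VB_G(P)` of the path `P`: `V(P)` together with all vertices of the
`P`-components. -/
def vertexBunch (G : SimpleGraph V) (X : Set V) {a b : V} (P : G.Walk a b) : Set V :=
  {v | v ∈ P.support} ∪
    ⋃ p ∈ SComponents G X {v | v ∈ P.support}, xCompSet G p.1 p.2

/-! ### Moves of groups of guards -/

section Moves

variable {G : SimpleGraph V} {C C' D D' : Multiset V} {M N : Multiset (V × V)} {u v : V}

/-- The guards at `C` can be rearranged to `C'` by one valid move. -/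
def Moves (G : SimpleGraph V) (C C' : Multiset V) : Prop :=
  ∃ M, ValidMove G C C' M

/-- The guards at `C` can be rearranged to `C'` by one valid move that defends an attack on
`uv`. -/
def Defends (G : SimpleGraph V) (u v : V) (C C' : Multiset V) : Prop :=
  ∃ M, ValidMove G C C' M ∧ ((u, v) ∈ M ∨ (v, u) ∈ M)

lemma ValidMove.add (h : ValidMove G C C' M) (h' : ValidMove G D D' N) :
    ValidMove G (C + D) (C' + D') (M + N) :=
  ⟨by rw [Multiset.map_add, h.1, h'.1], by rw [Multiset.map_add, h.2.1, h'.2.1],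
    fun p hp => (Multiset.mem_add.1 hp).elim (h.2.2 p) (h'.2.2 p)⟩

lemma ValidMove.swap (h : ValidMove G C C' M) : ValidMove G C' C (M.map Prod.swap) := by
  refine ⟨by simpa using h.2.1, by simpa using h.1, fun p hp => ?_⟩
  obtain ⟨q, hq, rfl⟩ := Multiset.mem_map.1 hp
  exact (h.2.2 q hq).imp Eq.symm fun hadj => hadj.symm

lemma ValidMove.map {W : Type} {G' : SimpleGraph W} (f : G →g G') (h : ValidMove G C C' M) :
    ValidMove G' (C.map f) (C'.map f) (M.map (Prod.map f f)) := by
  refine ⟨by simp [← h.1], by simp [← h.2.1], fun p hp => ?_⟩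
  obtain ⟨q, hq, rfl⟩ := Multiset.mem_map.1 hp
  exact (h.2.2 q hq).imp (congrArg f) f.map_adj

lemma Moves.refl (G : SimpleGraph V) (C : Multiset V) : Moves G C C :=
  ⟨C.map fun v => (v, v), by simp, by simp, by simp⟩

lemma Moves.add (h : Moves G C C') (h' : Moves G D D') : Moves G (C + D) (C' + D') :=
  let ⟨_, hM⟩ := h; let ⟨_, hN⟩ := h'; ⟨_, hM.add hN⟩

lemma Moves.symm (h : Moves G C C') : Moves G C' C :=
  let ⟨_, hM⟩ := h; ⟨_, hM.swap⟩

lemma Moves.sum {ι : Type*} {s : Finset ι} {f g : ι → Multiset V}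
    (h : ∀ i ∈ s, Moves G (f i) (g i)) : Moves G (∑ i ∈ s, f i) (∑ i ∈ s, g i) := by
  classical
  induction s using Finset.induction_on with
  | empty => exact Moves.refl G 0
  | insert i s hi ih =>
    rw [Finset.sum_insert hi, Finset.sum_insert hi]
    exact (h i (Finset.mem_insert_self i s)).add (ih fun j hj => h j (Finset.mem_insert_of_mem hj))

lemma Defends.moves (h : Defends G u v C C') : Moves G C C' :=
  let ⟨M, hM, _⟩ := h; ⟨M, hM⟩

lemma Defends.add_right (h : Defends G u v C C') (h' : Moves G D D') :
    Defends G u v (C + D) (C' + D') :=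
  let ⟨_, hM, huv⟩ := h
  let ⟨_, hN⟩ := h'
  ⟨_, hM.add hN, huv.imp (Multiset.mem_add.2 <| .inl ·) (Multiset.mem_add.2 <| .inl ·)⟩

lemma Defends.add_left (h : Moves G C C') (h' : Defends G u v D D') :
    Defends G u v (C + D) (C' + D') := by
  rw [add_comm C, add_comm C']
  exact h'.add_right h

lemma Defends.sum {ι : Type*} {s : Finset ι} {f g : ι → Multiset V} {i : ι} (hi : i ∈ s)
    (h : Defends G u v (f i) (g i)) (h' : ∀ j ∈ s, j ≠ i → Moves G (f j) (g j)) :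
    Defends G u v (∑ j ∈ s, f j) (∑ j ∈ s, g j) := by
  classical
  rw [← Finset.add_sum_erase s f hi, ← Finset.add_sum_erase s g hi]
  exact h.add_right <| .sum fun j hj =>
    h' j (Finset.mem_of_mem_erase hj) (Finset.ne_of_mem_erase hj)

lemma Defends.symm (h : Defends G u v C C') : Defends G v u C C' :=
  let ⟨M, hM, huv⟩ := h; ⟨M, hM, huv.symm⟩

lemma Defends.reverse (h : Defends G u v C C') : Defends G u v C' C :=
  let ⟨_, hM, huv⟩ := h
  ⟨_, hM.swap, huv.symm.imp (Multiset.mem_map.2 ⟨_, ·, rfl⟩) (Multiset.mem_map.2 ⟨_, ·, rfl⟩)⟩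

lemma Defends.of_adj (h : G.Adj u v) : Defends G u v {u} {v} :=
  ⟨{(u, v)}, ⟨rfl, rfl, by simpa using Or.inr h⟩, Or.inl (Multiset.mem_singleton_self _)⟩

lemma Defends.swap (h : G.Adj u v) (hu : u ∈ C) (hv : v ∈ C) : Defends G u v C C := by
  classical
  obtain ⟨D, rfl⟩ : ∃ D, C = {u} + ({v} + D) := by
    obtain ⟨D, rfl⟩ := Multiset.exists_cons_of_mem hu
    obtain ⟨D', rfl⟩ := Multiset.exists_cons_of_mem
      ((Multiset.mem_cons.1 hv).resolve_left h.ne')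
    exact ⟨D', rfl⟩
  have := (Defends.of_adj h).add_right ((Defends.of_adj h.symm).moves.add (Moves.refl G D))
  rwa [add_left_comm ({v} : Multiset V)] at this

lemma Defends.map {W : Type} {G' : SimpleGraph W} (f : G →g G') (h : Defends G u v C C') :
    Defends G' (f u) (f v) (C.map f) (C'.map f) :=
  let ⟨_, hM, huv⟩ := h
  ⟨_, hM.map f, huv.imp (Multiset.mem_map.2 ⟨_, ·, rfl⟩) (Multiset.mem_map.2 ⟨_, ·, rfl⟩)⟩

lemma Moves.map {W : Type} {G' : SimpleGraph W} (f : G →g G') (h : Moves G C C') :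
    Moves G' (C.map f) (C'.map f) :=
  let ⟨_, hM⟩ := h; ⟨_, hM.map f⟩

end Moves

/-! ### Strategies with ports -/

section Transfers

variable [DecidableEq V] {G : SimpleGraph V} {r r' : Multiset V → Multiset V → Prop}
  {p q : Multiset V × Finset V}

/-- Passing from the state `p = (W, H)` to the state `q = (W', H')` by a rearrangement in `r`.
In a state, `W` lists the guards that are present and `H` the vertices at which one more guard
is on loan to the outside; a guard newly lent at `y` leaves from `y`, a guard given back at `y`
arrives at `y`, and the other guards are rearranged according to `r`. -/
def Transfers (r : Multiset V → Multiset V → Prop) (p q : Multiset V × Finset V) : Prop :=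
  ∃ C C', r C C' ∧ p.1 = C + (q.2 \ p.2).val ∧ q.1 = C' + (p.2 \ q.2).val

lemma Transfers.of_rel {C C' : Multiset V} (H : Finset V) (h : r C C') :
    Transfers r (C, H) (C', H) :=
  ⟨C, C', h, by simp, by simp⟩

lemma Transfers.of_lent_eq (h : Transfers r p q) (hpq : p.2 = q.2) : r p.1 q.1 := by
  obtain ⟨C, C', h, hp, hq⟩ := h
  simp only [hpq, Finset.sdiff_self, Finset.empty_val, add_zero] at hp hq
  rwa [hp, hq]

lemma Transfers.of_lend {y : V} {R : Multiset V} (h : Transfers r p q) (hp : p.2 = ∅)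
    (hq : q.2 = {y}) (hR : p.1 = y ::ₘ R) : r R q.1 := by
  obtain ⟨C, C', h, hpC, hqC⟩ := h
  rw [hp, hq, Finset.empty_sdiff, Finset.empty_val, add_zero] at hqC
  rw [hp, hq, Finset.sdiff_empty, Finset.singleton_val, add_comm, Multiset.singleton_add, hR,
    Multiset.cons_inj_right] at hpC
  rwa [hpC, hqC]

lemma Transfers.of_reclaim {y : V} {R : Multiset V} (h : Transfers r p q) (hp : p.2 = {y})
    (hq : q.2 = ∅) (hR : q.1 = y ::ₘ R) : r p.1 R := by
  obtain ⟨C, C', h, hpC, hqC⟩ := h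
  rw [hp, hq, Finset.empty_sdiff, Finset.empty_val, add_zero] at hpC
  rw [hp, hq, Finset.sdiff_empty, Finset.singleton_val, add_comm, Multiset.singleton_add, hR,
    Multiset.cons_inj_right] at hqC
  rwa [hpC, hqC]

lemma Transfers.mono (hr : ∀ ⦃C C'⦄, r C C' → r' C C') (h : Transfers r p q) :
    Transfers r' p q :=
  let ⟨C, C', h, hp, hq⟩ := h; ⟨C, C', hr h, hp, hq⟩

lemma Transfers.reverse (hr : ∀ ⦃C C'⦄, r C C' → r' C' C) (h : Transfers r p q) :
    Transfers r' q p :=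
  let ⟨C, C', h, hp, hq⟩ := h; ⟨C', C, hr h, hq, hp⟩

lemma val_sdiff_add_val {α : Type*} [DecidableEq α] (s t : Finset α) :
    (s \ t).val + t.val = (s ∪ t).val := by
  rw [Finset.union_val, Multiset.union_def, Finset.sdiff_val]

lemma Transfers.of_total {C C' D D' : Multiset V} {H H' : Finset V} (h : r C C')
    (hD : D + H.val = C + (H ∪ H').val) (hD' : D' + H'.val = C' + (H ∪ H').val) :
    Transfers r (D, H) (D', H') := by
  rw [Finset.union_comm, ← val_sdiff_add_val, ← add_assoc] at hD
  rw [← val_sdiff_add_val, ← add_assoc] at hD'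
  exact ⟨C, C', h, add_right_cancel hD, add_right_cancel hD'⟩

end Transfers

/-- A set `T` of states `(W, H)` from which `N` guards keep the edges of `G` inside `S` defended,
where every `y ∈ H` is a port at which one of the `N` guards is currently on loan to the outside.
All ports `X` stay occupied, and on request a guard can be lent at any prescribed port. -/
structure PortStrategy [DecidableEq V] (G : SimpleGraph V) (S X : Finset V) (N : ℕ)
    (T : Set (Multiset V × Finset V)) : Prop where
  nonempty : T.Nonempty
  lent_subset : ∀ p ∈ T, p.2 ⊆ X
  card_add_card : ∀ p ∈ T, Multiset.card p.1 + p.2.card = N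
  port_mem : ∀ p ∈ T, ∀ y ∈ X, y ∈ p.1
  cover : ∀ p ∈ T, ∀ u ∈ S, ∀ v ∈ S, G.Adj u v → u ∈ p.1 ∨ v ∈ p.1
  lend : ∀ p ∈ T, ∀ y ∈ X, ∃ q ∈ T, y ∈ q.2 ∧ Transfers (Moves G) p q
  defend : ∀ p ∈ T, ∀ u ∈ S, ∀ v ∈ S, G.Adj u v → ∃ q ∈ T, Transfers (Defends G u v) p q

/-- A strategy on a branch `S` whose only port is its root `x`, with `a` guards besides the one
that always occupies `x` and the one that can be lent there. In addition the loan can be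
reclaimed, and as long as there is no loan, attacks can be defended without making one. -/
structure RootedStrategy [DecidableEq V] (G : SimpleGraph V) (S : Finset V) (x : V) (a : ℕ)
    (T : Set (Multiset V × Finset V)) : Prop extends PortStrategy G S {x} (a + 2) T where
  reclaim : ∀ p ∈ T, ∃ q ∈ T, q.2 = ∅ ∧ Transfers (Moves G) p q
  defend_of_not_lent : ∀ p ∈ T, p.2 = ∅ → ∀ u ∈ S, ∀ v ∈ S, G.Adj u v →
    ∃ q ∈ T, q.2 = ∅ ∧ Transfers (Defends G u v) p q

section RootedStrategy

variable [DecidableEq V] {G : SimpleGraph V} {S : Finset V} {x : V} {a : ℕ}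
  {T : Set (Multiset V × Finset V)}

lemma RootedStrategy.singleton (G : SimpleGraph V) (x : V) :
    RootedStrategy G {x} x 0 {({x}, {x}), ({x, x}, ∅)} where
  nonempty := ⟨_, Or.inl rfl⟩
  lent_subset := by simp
  card_add_card := by simp
  port_mem := by simp
  cover := by simp
  lend := by
    have h : Transfers (Moves G) ({x, x}, ∅) ({x}, {x}) :=
      ⟨{x}, {x}, Moves.refl G _, rfl, by simp⟩
    rintro p (rfl | rfl) y hy
    · exact ⟨_, Or.inl rfl, hy, .of_rel _ (Moves.refl G _)⟩
    · exact ⟨_, Or.inl rfl, hy, h⟩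
  defend := by simp
  reclaim := by
    have h : Transfers (Moves G) ({x}, {x}) ({x, x}, ∅) :=
      ⟨{x}, {x}, Moves.refl G _, by simp, rfl⟩
    rintro p (rfl | rfl)
    · exact ⟨_, Or.inr rfl, rfl, h⟩
    · exact ⟨_, Or.inr rfl, rfl, .of_rel _ (Moves.refl G _)⟩
  defend_of_not_lent := by simp

end RootedStrategy

/-! ### Gluing branches to a block -/

section Branch

variable [DecidableEq V] {G : SimpleGraph V} {X K K' S : Finset V} {x y : V} {a : ℕ}
  {T : Set (Multiset V × Finset V)} {R : Multiset V}

/-- `R` lists the guards, apart from the one at the root `y`, in a state of the branch strategy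
`T` at `y`. Here `K` is the set of roots at which the rest of the graph supplies an additional
guard, so the branch itself lends a guard exactly when `y ∉ K`. -/
def BranchState (T : Set (Multiset V × Finset V)) (K : Finset V) (y : V) (R : Multiset V) : Prop :=
  ∃ q ∈ T, q.1 = y ::ₘ R ∧ q.2 = if y ∈ K then ∅ else {y}

lemma BranchState.card (h : RootedStrategy G S y a T) (hR : BranchState T K y R) :
    Multiset.card R = a + if y ∈ K then 1 else 0 := by
  obtain ⟨q, hq, hqR, hqK⟩ := hR
  have := h.card_add_card q hq
  rw [hqR, hqK, Multiset.card_cons] at this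
  split_ifs at this ⊢ <;> simp at this ⊢ <;> omega

lemma BranchState.cover (h : RootedStrategy G S y a T) (hR : BranchState T K y R) {u v : V}
    (hu : u ∈ S) (hv : v ∈ S) (huv : G.Adj u v) : u ∈ y ::ₘ R ∨ v ∈ y ::ₘ R := by
  obtain ⟨q, hq, hqR, -⟩ := hR
  exact hqR ▸ h.cover q hq u hu v hv huv

lemma RootedStrategy.branchState (h : RootedStrategy G S y a T) {q : Multiset V × Finset V}
    (hq : q ∈ T) (hK : q.2 = if y ∈ K then ∅ else {y}) :
    ∃ R, q.1 = y ::ₘ R ∧ BranchState T K y R := by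
  obtain ⟨R, hR⟩ := Multiset.exists_cons_of_mem (h.port_mem q hq y (Finset.mem_singleton_self y))
  exact ⟨R, hR, q, hq, hR, hK⟩

lemma RootedStrategy.lent_eq_singleton (h : RootedStrategy G S y a T)
    {q : Multiset V × Finset V} (hq : q ∈ T) (hy : y ∈ q.2) : q.2 = {y} :=
  (Finset.subset_singleton_iff.1 (h.lent_subset q hq)).resolve_left (Finset.ne_empty_of_mem hy)

lemma RootedStrategy.exists_branchState (h : RootedStrategy G S y a T) (K : Finset V) :
    ∃ R, BranchState T K y R := by
  obtain ⟨p, hp⟩ := h.nonempty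
  by_cases hy : y ∈ K
  · obtain ⟨q, hq, hqe, -⟩ := h.reclaim p hp
    exact (h.branchState hq (by rw [if_pos hy, hqe])).imp fun _ => And.right
  · obtain ⟨q, hq, hyq, -⟩ := h.lend p hp y (Finset.mem_singleton_self y)
    exact (h.branchState hq (by rw [if_neg hy, h.lent_eq_singleton hq hyq])).imp fun _ => And.right

lemma BranchState.exists_moves (h : RootedStrategy G S y a T) (hR : BranchState T K y R)
    (K' : Finset V) : ∃ R', BranchState T K' y R' ∧
      Moves G (R + if y ∈ K' \ K then {y} else 0) (R' + if y ∈ K \ K' then {y} else 0) := by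
  by_cases hKK' : y ∈ K ↔ y ∈ K'
  · refine ⟨R, by simpa only [BranchState, hKK'] using hR, ?_⟩
    simpa [hKK'] using Moves.refl G R
  obtain ⟨p, hp, hpR, hpK⟩ := hR
  by_cases hy : y ∈ K
  · have hy' : y ∉ K' := by tauto
    rw [if_pos hy] at hpK
    obtain ⟨q, hq, hyq, hpq⟩ := h.lend p hp y (Finset.mem_singleton_self y)
    have hq2 := h.lent_eq_singleton hq hyq
    obtain ⟨R', hqR, hR'⟩ := h.branchState hq (by rwa [if_neg hy'])
    refine ⟨R', hR', ?_⟩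
    simpa [hy, hy', hqR, add_comm R'] using hpq.of_lend hpK hq2 hpR
  · have hy' : y ∈ K' := by tauto
    rw [if_neg hy] at hpK
    obtain ⟨q, hq, hq2, hpq⟩ := h.reclaim p hp
    obtain ⟨R', hqR, hR'⟩ := h.branchState hq (by rwa [if_pos hy'])
    refine ⟨R', hR', ?_⟩
    simpa [hy, hy', hpR, add_comm R] using hpq.of_reclaim hpK hq2 hqR

lemma BranchState.exists_defends (h : RootedStrategy G S y a T) (hR : BranchState T K y R)
    {u v : V} (hu : u ∈ S) (hv : v ∈ S) (huv : G.Adj u v) :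
    (∃ R', BranchState T K y R' ∧ Defends G u v (y ::ₘ R) (y ::ₘ R')) ∨
      y ∉ K ∧ ∃ R', BranchState T {y} y R' ∧ Defends G u v (y ::ₘ R) R' := by
  obtain ⟨p, hp, hpR, hpK⟩ := hR
  by_cases hy : y ∈ K
  · rw [if_pos hy] at hpK
    obtain ⟨q, hq, hq2, hpq⟩ := h.defend_of_not_lent p hp hpK u hu v hv huv
    obtain ⟨R', hqR, hR'⟩ := h.branchState (K := K) hq (by rw [if_pos hy, hq2])
    exact .inl ⟨R', hR', hpR ▸ hqR ▸ hpq.of_lent_eq (hpK.trans hq2.symm)⟩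
  rw [if_neg hy] at hpK
  obtain ⟨q, hq, hpq⟩ := h.defend p hp u hu v hv huv
  rcases Finset.subset_singleton_iff.1 (h.lent_subset q hq) with hq2 | hq2
  · obtain ⟨R', hqR, hR'⟩ := h.branchState (K := {y}) hq
      (by rw [if_pos (Finset.mem_singleton_self y), hq2])
    exact .inr ⟨hy, R', hR', hpR ▸ hpq.of_reclaim hpK hq2 hqR⟩
  · obtain ⟨R', hqR, hR'⟩ := h.branchState (K := K) hq (by rw [if_neg hy, hq2])
    exact .inl ⟨R', hR', hpR ▸ hqR ▸ hpq.of_lent_eq (hpK.trans hq2.symm)⟩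

end Branch

section Branches

variable [DecidableEq V] {G : SimpleGraph V} {X K K' A : Finset V} {y : V} {S : V → Finset V}
  {a : V → ℕ} {T : V → Set (Multiset V × Finset V)} {R : V → Multiset V}

lemma sum_add_ite (hA : A ⊆ X) (R : V → Multiset V) :
    ∑ y ∈ X, (R y + if y ∈ A then {y} else 0) = ∑ y ∈ X, R y + A.val := by
  rw [Finset.sum_add_distrib, Finset.sum_ite_mem, Finset.inter_eq_right.2 hA,
    Finset.sum_multiset_singleton]

lemma exists_branches_moves (hT : ∀ y ∈ X, RootedStrategy G (S y) y (a y) (T y))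
    (hR : ∀ y ∈ X, BranchState (T y) K y (R y)) (hK : K ⊆ X) (hK' : K' ⊆ X) :
    ∃ R' : V → Multiset V, (∀ y ∈ X, BranchState (T y) K' y (R' y)) ∧
      Moves G (∑ y ∈ X, R y + (K' \ K).val) (∑ y ∈ X, R' y + (K \ K').val) := by
  choose! R' hR' hmoves using fun y hy => (hR y hy).exists_moves (hT y hy) K'
  refine ⟨R', hR', ?_⟩
  rw [← sum_add_ite (Finset.sdiff_subset.trans hK'), ← sum_add_ite (Finset.sdiff_subset.trans hK)]
  exact .sum hmoves

lemma exists_branches_defends (hT : ∀ y ∈ X, RootedStrategy G (S y) y (a y) (T y))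
    (hR : ∀ y ∈ X, BranchState (T y) K y (R y)) (hK : K ⊆ X) (hy : y ∈ X) {u v : V}
    (hu : u ∈ S y) (hv : v ∈ S y) (huv : G.Adj u v) :
    (∃ R' : V → Multiset V, (∀ z ∈ X, BranchState (T z) K z (R' z)) ∧
      Defends G u v (∑ z ∈ X, R z + {y}) (∑ z ∈ X, R' z + {y})) ∨
    y ∉ K ∧ ∀ K' ⊆ X, y ∈ K' → ∃ R' : V → Multiset V,
      (∀ z ∈ X, BranchState (T z) K' z (R' z)) ∧
      Defends G u v (∑ z ∈ X, R z + (K' \ K).val) (∑ z ∈ X, R' z + (K \ K').val) := by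
  rcases (hR y hy).exists_defends (hT y hy) hu hv huv with ⟨Ry, hRy, hd⟩ | ⟨hyK, Ry, hRy, hd⟩
  · refine .inl ⟨Function.update R y Ry, fun z hz => ?_, ?_⟩
    · rcases eq_or_ne z y with rfl | hzy
      · simpa using hRy
      · simpa [hzy] using hR z hz
    · have hyX := Finset.singleton_subset_iff.2 hy
      rw [← Finset.singleton_val, ← sum_add_ite hyX, ← sum_add_ite hyX]
      refine .sum hy (by simpa [add_comm _ {y}] using hd) fun z _ hzy => ?_
      simpa [hzy] using Moves.refl G (R z)
  · refine .inr ⟨hyK, fun K' hK' hyK' => ?_⟩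
    choose! R' hR' hmoves using fun y hy => (hR y hy).exists_moves (hT y hy) K'
    refine ⟨Function.update R' y Ry, fun z hz => ?_, ?_⟩
    · rcases eq_or_ne z y with rfl | hzy
      · simpa [BranchState, hyK'] using hRy
      · simpa [hzy] using hR' z hz
    · rw [← sum_add_ite (Finset.sdiff_subset.trans hK'),
        ← sum_add_ite (Finset.sdiff_subset.trans hK)]
      refine .sum hy (by simpa [hyK, hyK', add_comm (R y)] using hd) fun z hz hzy => ?_
      simpa [hzy] using hmoves z hz

end Branches

section Glue

variable [DecidableEq V] {G : SimpleGraph V} {B S X : Finset V} {x : V} {N : ℕ}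
  {TB : Set (Multiset V × Finset V)} {Sf : V → Finset V} {a : V → ℕ}
  {T : V → Set (Multiset V × Finset V)}

/-- The combined states of a block strategy `TB` with ports `X` and branch strategies `T y` at
the ports `y`. A guard lent by the block is on loan to the branch at that port, except for the
ports in `q.2 ⊆ {x}`, where it is on loan to the outside. -/
def gluedStates (TB : Set (Multiset V × Finset V)) (T : V → Set (Multiset V × Finset V))
    (X : Finset V) (x : V) : Set (Multiset V × Finset V) :=
  {q | ∃ O H, ∃ R : V → Multiset V, (O, H) ∈ TB ∧ q.2 ⊆ H ∧ q.2 ⊆ {x} ∧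
    (∀ y ∈ X, BranchState (T y) (H \ q.2) y (R y)) ∧ q.1 = O + ∑ y ∈ X, R y}

/-- Guards given away at a port balance those received there: `H → H'` is the change of the loans
of the block, `L → L'` that of the loans to the outside, and `H \ L → H' \ L'` that of the loans
to the branches. -/
lemma val_sdiff_flow {H H' L L' : Finset V} (hL : L ⊆ H) (hL' : L' ⊆ H') :
    ((H' \ L') \ (H \ L)).val + (L' \ L).val = (H' \ H).val + (H ∩ H' ∩ symmDiff L L').val := by
  ext v
  have h₁ := @hL v
  have h₂ := @hL' v
  simp only [Multiset.count_add, Multiset.count_eq_of_nodup (Finset.nodup _), Finset.mem_val,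
    Finset.mem_sdiff, Finset.mem_inter, Finset.mem_symmDiff]
  by_cases v ∈ H <;> by_cases v ∈ H' <;> by_cases v ∈ L <;> by_cases v ∈ L' <;> simp_all

lemma transfers_of_flow {r : Multiset V → Multiset V → Prop} {O O' C C' ρ ρ' : Multiset V}
    {H H' L L' : Finset V} (hL : L ⊆ H) (hL' : L' ⊆ H')
    (hO : O = C + ((H' \ H).val + (H ∩ H' ∩ symmDiff L L').val))
    (hO' : O' = C' + ((H \ H').val + (H ∩ H' ∩ symmDiff L L').val))
    (h : r (C + (ρ + ((H' \ L') \ (H \ L)).val)) (C' + (ρ' + ((H \ L) \ (H' \ L')).val))) :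
    Transfers r (O + ρ, L) (O' + ρ', L') := by
  refine ⟨_, _, h, ?_, ?_⟩
  · rw [hO, ← val_sdiff_flow hL hL']
    ac_rfl
  · rw [hO', Finset.inter_comm H, symmDiff_comm, ← val_sdiff_flow hL' hL]
    ac_rfl

lemma transfers_of_transfers {r r₁ r₂ : Multiset V → Multiset V → Prop} {O O' ρ ρ' : Multiset V}
    {H H' L L' : Finset V} (hL : L ⊆ H) (hL' : L' ⊆ H') (hLL' : H ∩ H' ∩ symmDiff L L' = ∅)
    (hr : ∀ ⦃C C' D D'⦄, r₁ C C' → r₂ D D' → r (C + D) (C' + D'))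
    (h₁ : Transfers r₁ (O, H) (O', H'))
    (h₂ : r₂ (ρ + ((H' \ L') \ (H \ L)).val) (ρ' + ((H \ L) \ (H' \ L')).val)) :
    Transfers r (O + ρ, L) (O' + ρ', L') := by
  obtain ⟨C, C', h₁, hO, hO'⟩ := h₁
  exact transfers_of_flow hL hL' (by simpa [hLL'] using hO) (by simpa [hLL'] using hO') (hr h₁ h₂)

lemma transfers_of_subset {r : Multiset V → Multiset V → Prop} {O ρ ρ' : Multiset V}
    {H L L' : Finset V} (hL : L ⊆ H) (hL' : L' ⊆ H) (hO : H.val ≤ O)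
    (hr : ∀ ⦃C D D'⦄, r D D' → r (C + D) (C + D'))
    (h : r (ρ + ((H \ L') \ (H \ L)).val) (ρ' + ((H \ L) \ (H \ L')).val)) :
    Transfers r (O + ρ, L) (O + ρ', L') := by
  have hE : (H ∩ H ∩ symmDiff L L').val ≤ O :=
    (Finset.val_le_iff.2 (by rw [Finset.inter_self]; exact Finset.inter_subset_left)).trans hO
  exact transfers_of_flow (C := O - (H ∩ H ∩ symmDiff L L').val) hL hL'
    (by rw [Finset.sdiff_self, Finset.empty_val, zero_add, Multiset.sub_add_cancel hE])
    (by rw [Finset.sdiff_self, Finset.empty_val, zero_add, Multiset.sub_add_cancel hE]) (hr h)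

lemma PortStrategy.lent_le (hB : PortStrategy G B X N TB) {p : Multiset V × Finset V}
    (hp : p ∈ TB) : p.2.val ≤ p.1 :=
  (Multiset.le_iff_subset p.2.nodup).2 fun _ hy => hB.port_mem p hp _ (hB.lent_subset p hp hy)

lemma exists_gluedStates_transfers (hB : PortStrategy G B X N TB)
    (hT : ∀ y ∈ X, RootedStrategy G (Sf y) y (a y) (T y))
    {r : Multiset V → Multiset V → Prop}
    (hr : ∀ ⦃C C' D D'⦄, r C C' → Moves G D D' → r (C + D) (C' + D'))
    {O O' : Multiset V} {H H' L L' : Finset V} {R : V → Multiset V} (hO : (O, H) ∈ TB)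
    (hL : L ⊆ H) (hR : ∀ y ∈ X, BranchState (T y) (H \ L) y (R y)) (hO' : (O', H') ∈ TB)
    (hL' : L' ⊆ H') (hxL' : L' ⊆ {x}) (hLL' : H ∩ H' ∩ symmDiff L L' = ∅)
    (h : Transfers r (O, H) (O', H')) :
    ∃ W', (W', L') ∈ gluedStates TB T X x ∧ Transfers r (O + ∑ y ∈ X, R y, L) (W', L') := by
  obtain ⟨R', hR', hmoves⟩ := exists_branches_moves hT hR
    (Finset.sdiff_subset.trans (hB.lent_subset _ hO))
    (Finset.sdiff_subset.trans (hB.lent_subset _ hO'))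
  exact ⟨O' + ∑ y ∈ X, R' y, ⟨O', H', R', hO', hL', hxL', hR', rfl⟩,
    transfers_of_transfers hL hL' hLL' hr h hmoves⟩

lemma exists_gluedStates_transfers_of_subset (hB : PortStrategy G B X N TB)
    (hT : ∀ y ∈ X, RootedStrategy G (Sf y) y (a y) (T y))
    {O : Multiset V} {H L L' : Finset V} {R : V → Multiset V} (hO : (O, H) ∈ TB)
    (hL : L ⊆ H) (hR : ∀ y ∈ X, BranchState (T y) (H \ L) y (R y))
    (hL' : L' ⊆ H) (hxL' : L' ⊆ {x}) :
    ∃ W', (W', L') ∈ gluedStates TB T X x ∧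
      Transfers (Moves G) (O + ∑ y ∈ X, R y, L) (W', L') := by
  have hHX := hB.lent_subset _ hO
  obtain ⟨R', hR', hmoves⟩ := exists_branches_moves hT hR
    (Finset.sdiff_subset.trans hHX) (Finset.sdiff_subset.trans hHX)
  exact ⟨O + ∑ y ∈ X, R' y, ⟨O, H, R', hO, hL', hxL', hR', rfl⟩,
    transfers_of_subset hL hL' (hB.lent_le hO) (fun C _ _ h => (Moves.refl G C).add h) hmoves⟩

lemma inter_symmDiff_inter {α : Type*} [DecidableEq α] {H H' L : Finset α} :
    H ∩ H' ∩ symmDiff L (L ∩ H') = ∅ := by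
  ext v
  simp only [Finset.mem_inter, Finset.mem_symmDiff, Finset.notMem_empty, iff_false]
  tauto

lemma exists_gluedStates_defends_branch (hB : PortStrategy G B X N TB)
    (hT : ∀ y ∈ X, RootedStrategy G (Sf y) y (a y) (T y)) {p : Multiset V × Finset V}
    (hp : p ∈ gluedStates TB T X x) {u v y : V} (hy : y ∈ X) (hu : u ∈ Sf y) (hv : v ∈ Sf y)
    (huv : G.Adj u v) :
    ∃ q ∈ gluedStates TB T X x, q.2 ⊆ p.2 ∧ Transfers (Defends G u v) p q := by
  obtain ⟨W, L⟩ := p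
  obtain ⟨O, H, R, hO, hL, hxL, hR, rfl : W = _⟩ := hp
  have hHX := hB.lent_subset _ hO
  rcases exists_branches_defends hT hR (Finset.sdiff_subset.trans hHX) hy hu hv huv with
    ⟨R', hR', hd⟩ | ⟨-, hpull⟩
  · refine ⟨(O + ∑ z ∈ X, R' z, L), ⟨O, H, R', hO, hL, hxL, hR', rfl⟩, subset_rfl, .of_rel _ ?_⟩
    obtain ⟨C, rfl⟩ := Multiset.exists_cons_of_mem (hB.port_mem _ hO y hy)
    simpa [← Multiset.singleton_add, add_comm, add_left_comm] using
      Defends.add_left (Moves.refl G C) hd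
  by_cases hyL : y ∈ L
  · obtain ⟨R', hR', hd⟩ := hpull H hHX (hL hyL)
    refine ⟨(O + ∑ z ∈ X, R' z, ∅),
      ⟨O, H, R', hO, by simp, by simp, by simpa using hR', rfl⟩, by simp, ?_⟩
    exact transfers_of_subset hL (by simp) (hB.lent_le hO)
      (fun C _ _ h => Defends.add_left (Moves.refl G C) h) (by simpa using hd)
  · obtain ⟨⟨O', H'⟩, hO', hyH', hcall⟩ := hB.lend _ hO y hy
    obtain ⟨R', hR', hd⟩ := hpull (H' \ (L ∩ H'))
      (Finset.sdiff_subset.trans (hB.lent_subset _ hO')) (by simp_all)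
    exact ⟨(O' + ∑ z ∈ X, R' z, L ∩ H'), ⟨O', H', R', hO', Finset.inter_subset_right,
      Finset.inter_subset_left.trans hxL, hR', rfl⟩, Finset.inter_subset_left,
      transfers_of_transfers hL Finset.inter_subset_right inter_symmDiff_inter
        (fun _ _ _ _ => Defends.add_left) hcall hd⟩

lemma exists_gluedStates_defends (hB : PortStrategy G B X N TB)
    (hT : ∀ y ∈ X, RootedStrategy G (Sf y) y (a y) (T y)) {p : Multiset V × Finset V}
    (hp : p ∈ gluedStates TB T X x) {u v : V} (huv : G.Adj u v)
    (hS : (u ∈ B ∧ v ∈ B) ∨ ∃ y ∈ X, u ∈ Sf y ∧ v ∈ Sf y) :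
    ∃ q ∈ gluedStates TB T X x, q.2 ⊆ p.2 ∧ Transfers (Defends G u v) p q := by
  rcases hS with ⟨hu, hv⟩ | ⟨y, hy, hu, hv⟩
  · obtain ⟨W, L⟩ := p
    obtain ⟨O, H, R, hO, hL, hxL, hR, rfl : W = _⟩ := hp
    obtain ⟨⟨O', H'⟩, hO', hd⟩ := hB.defend _ hO u hu v hv huv
    obtain ⟨W', hW', h⟩ := exists_gluedStates_transfers hB hT (fun _ _ _ _ => Defends.add_right)
      hO hL hR hO' Finset.inter_subset_right (Finset.inter_subset_left.trans hxL)
      inter_symmDiff_inter hd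
    exact ⟨_, hW', Finset.inter_subset_left, h⟩
  · exact exists_gluedStates_defends_branch hB hT hp hy hu hv huv

lemma exists_gluedStates_lend (hB : PortStrategy G B X N TB)
    (hT : ∀ y ∈ X, RootedStrategy G (Sf y) y (a y) (T y)) (hx : x ∈ X)
    {p : Multiset V × Finset V} (hp : p ∈ gluedStates TB T X x) :
    ∃ q ∈ gluedStates TB T X x, q.2 = {x} ∧ Transfers (Moves G) p q := by
  obtain ⟨W, L⟩ := p
  obtain ⟨O, H, R, hO, hL, hxL, hR, rfl : W = _⟩ := hp
  by_cases hxH : x ∈ H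
  · obtain ⟨W', hW', h⟩ := exists_gluedStates_transfers_of_subset hB hT hO hL hR
      (Finset.singleton_subset_iff.2 hxH) subset_rfl
    exact ⟨_, hW', rfl, h⟩
  · obtain ⟨⟨O', H'⟩, hO', hxH', hcall⟩ := hB.lend _ hO x hx
    obtain rfl : L = ∅ := (Finset.subset_singleton_iff.1 hxL).resolve_right
      fun h => hxH (hL (h ▸ Finset.mem_singleton_self x))
    obtain ⟨W', hW', h⟩ := exists_gluedStates_transfers hB hT (fun _ _ _ _ => Moves.add) hO hL hR
      hO' (Finset.singleton_subset_iff.2 hxH') subset_rfl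
      (by grind [Finset.mem_symmDiff]) hcall
    exact ⟨_, hW', rfl, h⟩

lemma card_of_mem_gluedStates (hB : PortStrategy G B X N TB)
    (hT : ∀ y ∈ X, RootedStrategy G (Sf y) y (a y) (T y)) {p : Multiset V × Finset V}
    (hp : p ∈ gluedStates TB T X x) :
    Multiset.card p.1 + p.2.card = N + ∑ y ∈ X, a y := by
  obtain ⟨O, H, R, hO, hL, -, hR, hW⟩ := hp
  have hcard : Multiset.card O + H.card = N := hB.card_add_card _ hO
  have hHL : (H \ p.2).card + p.2.card = H.card := Finset.card_sdiff_add_card_eq_card hL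
  have hHX : H ⊆ X := hB.lent_subset _ hO
  rw [hW, Multiset.card_add, Multiset.card_sum,
    Finset.sum_congr rfl fun y hy => (hR y hy).card (hT y hy), Finset.sum_add_distrib,
    Finset.sum_ite_mem, Finset.inter_eq_right.2 (Finset.sdiff_subset.trans hHX),
    ← Finset.card_eq_sum_ones]
  omega

lemma cover_of_mem_gluedStates (hB : PortStrategy G B X N TB)
    (hT : ∀ y ∈ X, RootedStrategy G (Sf y) y (a y) (T y)) {p : Multiset V × Finset V}
    (hp : p ∈ gluedStates TB T X x) {u v : V} (huv : G.Adj u v)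
    (hS : (u ∈ B ∧ v ∈ B) ∨ ∃ y ∈ X, u ∈ Sf y ∧ v ∈ Sf y) : u ∈ p.1 ∨ v ∈ p.1 := by
  obtain ⟨O, H, R, hO, -, -, hR, hW⟩ := hp
  rw [hW]
  rcases hS with ⟨hu, hv⟩ | ⟨y, hy, hu, hv⟩
  · exact (hB.cover _ hO u hu v hv huv).imp (Multiset.mem_add.2 <| .inl ·)
      (Multiset.mem_add.2 <| .inl ·)
  · have hmem : ∀ w ∈ y ::ₘ R y, w ∈ O + ∑ y ∈ X, R y := by
      intro w hw
      rcases Multiset.mem_cons.1 hw with rfl | hw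
      · exact Multiset.mem_add.2 (.inl (hB.port_mem _ hO w hy))
      · exact Multiset.mem_add.2 (.inr (Multiset.mem_sum.2 ⟨y, hy, hw⟩))
    exact ((hR y hy).cover (hT y hy) hu hv huv).imp (hmem u) (hmem v)

theorem PortStrategy.glue (hB : PortStrategy G B X N TB)
    (hT : ∀ y ∈ X, RootedStrategy G (Sf y) y (a y) (T y)) (hx : x ∈ X)
    (hS : ∀ u ∈ S, ∀ v ∈ S, G.Adj u v → (u ∈ B ∧ v ∈ B) ∨ ∃ y ∈ X, u ∈ Sf y ∧ v ∈ Sf y)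
    {b : ℕ} (hb : N + ∑ y ∈ X, a y = b + 2) :
    RootedStrategy G S x b (gluedStates TB T X x) where
  nonempty := by
    obtain ⟨⟨O, H⟩, hO⟩ := hB.nonempty
    choose! R hR using fun y hy => (hT y hy).exists_branchState H
    exact ⟨(O + ∑ y ∈ X, R y, ∅), O, H, R, hO, by simp, by simp, by simpa using hR, rfl⟩
  lent_subset := fun _ ⟨_, _, _, _, _, hxL, _⟩ => hxL
  card_add_card := fun p hp => (card_of_mem_gluedStates hB hT hp).trans hb
  port_mem := by
    rintro p ⟨O, H, R, hO, -, -, -, hW⟩ y hy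
    rw [hW, Finset.mem_singleton.1 hy]
    exact Multiset.mem_add.2 (.inl (hB.port_mem _ hO x hx))
  cover := fun p hp u hu v hv huv => cover_of_mem_gluedStates hB hT hp huv (hS u hu v hv huv)
  lend := by
    intro p hp y hy
    obtain ⟨q, hq, hqx, h⟩ := exists_gluedStates_lend hB hT hx hp
    exact ⟨q, hq, hqx ▸ hy, h⟩
  defend := by
    intro p hp u hu v hv huv
    obtain ⟨q, hq, -, h⟩ := exists_gluedStates_defends hB hT hp huv (hS u hu v hv huv)
    exact ⟨q, hq, h⟩
  reclaim := by
    rintro ⟨W, L⟩ ⟨O, H, R, hO, hL, -, hR, rfl : W = _⟩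
    obtain ⟨W', hW', h⟩ := exists_gluedStates_transfers_of_subset hB hT hO hL hR
      (Finset.empty_subset H) (Finset.empty_subset {x})
    exact ⟨_, hW', rfl, h⟩
  defend_of_not_lent := by
    intro p hp hpe u hu v hv huv
    obtain ⟨q, hq, hqp, h⟩ := exists_gluedStates_defends hB hT hp huv (hS u hu v hv huv)
    exact ⟨q, hq, Finset.subset_empty.1 (hpe ▸ hqp), h⟩

end Glue

/-! ### Reachability inside a set of vertices -/

section ReachableIn

variable {G : SimpleGraph V} {S T : Set V} {u v w : V}

/-- Some walk of `G` from `u` to `v` stays inside `T`; in particular `u, v ∈ T`. -/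
def ReachableIn (G : SimpleGraph V) (T : Set V) (u v : V) : Prop :=
  ∃ p : G.Walk u v, ∀ z ∈ p.support, z ∈ T

lemma ReachableIn.refl (G : SimpleGraph V) (hu : u ∈ T) : ReachableIn G T u u :=
  ⟨.nil, by simpa using hu⟩

lemma ReachableIn.symm : ReachableIn G T u v → ReachableIn G T v u :=
  fun ⟨p, hp⟩ => ⟨p.reverse, by simpa using hp⟩

lemma ReachableIn.trans : ReachableIn G T u v → ReachableIn G T v w → ReachableIn G T u w :=
  fun ⟨p, hp⟩ ⟨q, hq⟩ => ⟨p.append q, fun z hz =>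
    ((Walk.mem_support_append_iff p q).1 hz).elim (hp z) (hq z)⟩

lemma ReachableIn.mono (hST : S ⊆ T) : ReachableIn G S u v → ReachableIn G T u v :=
  fun ⟨p, hp⟩ => ⟨p, fun z hz => hST (hp z hz)⟩

lemma ReachableIn.cons (h : G.Adj u v) (hu : u ∈ T) (hv : ReachableIn G T v w) :
    ReachableIn G T u w :=
  let ⟨p, hp⟩ := hv; ⟨.cons h p, by simpa [hu] using hp⟩

lemma ReachableIn.of_adj (h : G.Adj u v) (hu : u ∈ T) (hv : v ∈ T) : ReachableIn G T u v :=
  .cons h hu (.refl G hv)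

lemma ReachableIn.induction {P : V → Prop} (h : ReachableIn G T u v) (hu : P u)
    (step : ∀ ⦃a b⦄, a ∈ T → b ∈ T → G.Adj a b → P a → P b) : P v := by
  obtain ⟨p, hp⟩ := h
  induction p with
  | nil => exact hu
  | cons hadj p ih =>
    simp only [Walk.support_cons, List.mem_cons, forall_eq_or_imp] at hp
    exact ih (step hp.1 (hp.2 _ p.start_mem_support) hadj hu) hp.2

lemma reachableIn_iff_reachable {W : Type} {H : SimpleGraph W} (f : H ↪g G) {a b : W} :
    ReachableIn G (Set.range f) (f a) (f b) ↔ H.Reachable a b := by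
  refine ⟨fun h => ?_, fun ⟨p⟩ => ⟨p.map f.toHom, fun z hz => ?_⟩⟩
  · suffices ∃ c, f c = f b ∧ H.Reachable a c by
      obtain ⟨c, hcb, hac⟩ := this
      exact f.injective hcb ▸ hac
    refine h.induction (P := fun v => ∃ c, f c = v ∧ H.Reachable a c) ⟨a, rfl, .refl a⟩ ?_
    rintro _ _ - ⟨d, rfl⟩ hcd ⟨c, rfl, hac⟩
    exact ⟨d, rfl, hac.trans (f.map_adj_iff.1 hcd).reachable⟩
  · obtain ⟨c, -, rfl⟩ := List.mem_map.1 (Walk.support_map f.toHom p ▸ hz)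
    exact Set.mem_range_self c

lemma reachableIn_iff_reachable_induce {u v : S} :
    ReachableIn G S u v ↔ (G.induce S).Reachable u v := by
  have := reachableIn_iff_reachable (Embedding.induce (G := G) S) (a := u) (b := v)
  rwa [show Set.range (Embedding.induce (G := G) S) = S from Subtype.range_val] at this

end ReachableIn

/-! ### Blocks all of whose vertex covers are connected -/

lemma Moves.exists_support {G : SimpleGraph V} {u v : V} (p : G.Walk u v) :
    ∃ C C', Moves G C C' ∧ (p.support : Multiset V) = v ::ₘ C ∧
      (p.support : Multiset V) = u ::ₘ C' := by
  induction p with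
  | nil => exact ⟨0, 0, Moves.refl G 0, rfl, rfl⟩
  | @cons u a v h p ih =>
    obtain ⟨C, C', hmoves, hC, hC'⟩ := ih
    refine ⟨u ::ₘ C, a ::ₘ C', (Defends.of_adj h).moves.add hmoves, ?_, ?_⟩
    · rw [Walk.support_cons, ← Multiset.cons_coe, hC, Multiset.cons_swap]
    · rw [Walk.support_cons, ← Multiset.cons_coe, hC']

section Demand

variable [DecidableEq V] {G : SimpleGraph V} {B X : Finset V} {x : V}

/-- The constraints that an eternal vertex cover configuration imposes on the numbers `d v` of
guards which the parts of the graph attached at the vertices `v` of a block `B` hold beyond their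
own needs. Here `X` is the set of vertices of `B` with a nontrivial attached part, together with
the root `x`. -/
structure Demand (G : SimpleGraph V) (B X : Finset V) (x : V) (d : V → ℕ) : Prop where
  one_le_of_port : ∀ y ∈ X, y ≠ x → 1 ≤ d y
  cover : ∀ u ∈ B, ∀ v ∈ B, G.Adj u v → u ≠ x → v ≠ x → 1 ≤ d u ∨ 1 ≤ d v
  two_le : ∀ Y ⊆ X.erase x, ∀ z ∈ Y, ∀ w ∈ B, w ∉ Y → G.Adj z w →
    (∀ y ∈ Y, ∀ u ∈ B, G.Adj y u → u ∈ Y ∨ u ∉ X ∧ d u = 0) → ∃ y ∈ Y, 2 ≤ d y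

/-- Some strategy on the block `B` with ports `X` uses no more guards than any defense has to
provide: two at the root `x` and the demand of the other vertices. -/
def HasOptimalStrategy (G : SimpleGraph V) (B X : Finset V) (x : V) : Prop :=
  ∃ N T, PortStrategy G B X N T ∧ ∀ d, Demand G B X x d → N ≤ 2 + ∑ v ∈ B.erase x, d v

lemma Moves.erase_erase {T : Finset V} {u v : V} (h : ReachableIn G T u v) :
    Moves G (T.val.erase v) (T.val.erase u) := by
  obtain ⟨q, hq⟩ := h
  obtain ⟨R, hR⟩ : ∃ R, T.val = (q.bypass.support : Multiset V) + R := by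
    refine Multiset.le_iff_exists_add.1 ((Multiset.le_iff_subset ?_).2 fun z hz => ?_)
    · exact Multiset.coe_nodup.2 q.bypass_isPath.support_nodup
    · exact hq z (q.support_bypass_subset_support hz)
  obtain ⟨C, C', hmoves, hC, hC'⟩ := Moves.exists_support q.bypass
  have hv : T.val = v ::ₘ (C + R) := by rw [hR, hC, Multiset.cons_add]
  have hu : T.val = u ::ₘ (C' + R) := by rw [hR, hC', Multiset.cons_add]
  nth_rw 2 [hu]
  rw [hv, Multiset.erase_cons_head, Multiset.erase_cons_head]
  exact hmoves.add (Moves.refl G R)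

/-- The states in which the cover `T` is occupied and one more guard is at some `z ∈ B`; it is on
loan if `z` is a port. -/
def coverStates (B X T : Finset V) : Set (Multiset V × Finset V) :=
  {p | ∃ z ∈ B, (z ∈ X ∧ p = (T.val, {z})) ∨ (z ∉ X ∧ p = (z ::ₘ T.val, ∅))}

/-- `T` is a vertex cover of the subgraph induced on `B` that contains the ports `X`. -/
structure IsPortCover (G : SimpleGraph V) (B X T : Finset V) : Prop where
  subset : T ⊆ B
  ports_subset : X ⊆ T
  cover : ∀ u ∈ B, ∀ v ∈ B, G.Adj u v → u ∈ T ∨ v ∈ T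

section ConnectedCover

variable {T : Finset V}

lemma Moves.cons_erase (hT : ∀ u ∈ T, ∀ v ∈ T, ReachableIn G T u v)
    (hnbr : ∀ z ∈ B, z ∉ T → ∃ w ∈ T, G.Adj z w) {z u : V} (hz : z ∈ B) (hu : u ∈ T) :
    Moves G (z ::ₘ T.val.erase u) T.val := by
  by_cases hzT : z ∈ T
  · have := (Moves.refl G {z}).add (Moves.erase_erase (hT z hzT u hu))
    rwa [Multiset.singleton_add, Multiset.singleton_add, Multiset.cons_erase hzT] at this
  · obtain ⟨w, hw, hzw⟩ := hnbr z hz hzT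
    have := (Defends.of_adj hzw).moves.add (Moves.erase_erase (hT w hw u hu))
    rwa [Multiset.singleton_add, Multiset.singleton_add, Multiset.cons_erase hw] at this

lemma exists_coverStates_lend (hT : ∀ u ∈ T, ∀ v ∈ T, ReachableIn G T u v)
    (hnbr : ∀ z ∈ B, z ∉ T → ∃ w ∈ T, G.Adj z w) (hXT : X ⊆ T) (hXB : X ⊆ B)
    {p : Multiset V × Finset V} (hp : p ∈ coverStates B X T) {y : V} (hy : y ∈ X) :
    ∃ q ∈ coverStates B X T, y ∈ q.2 ∧ Transfers (Moves G) p q := by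
  refine ⟨(T.val, {y}), ⟨y, hXB hy, .inl ⟨hy, rfl⟩⟩, Finset.mem_singleton_self y, ?_⟩
  have hTy := (Multiset.cons_erase (hXT hy : y ∈ T.val)).symm
  obtain ⟨z, hzB, ⟨hzX, rfl⟩ | ⟨-, rfl⟩⟩ := hp
  · rcases eq_or_ne y z with rfl | hyz
    · exact .of_rel _ (Moves.refl G _)
    · refine ⟨_, _, Moves.erase_erase (hT z (hXT hzX) y (hXT hy)), ?_, ?_⟩
      · rwa [Finset.sdiff_singleton_eq_erase, Finset.erase_eq_of_notMem (by simpa using hyz.symm),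
          Finset.singleton_val, add_comm, Multiset.singleton_add]
      · rw [Finset.sdiff_singleton_eq_erase, Finset.erase_eq_of_notMem (by simpa using hyz),
          Finset.singleton_val, add_comm, Multiset.singleton_add,
          Multiset.cons_erase (hXT hzX : z ∈ T.val)]
  · refine ⟨_, _, Moves.cons_erase hT hnbr hzB (hXT hy), ?_, by simp⟩
    rw [Finset.sdiff_empty, Finset.singleton_val, add_comm, Multiset.singleton_add,
      Multiset.cons_swap, ← hTy]

lemma exists_coverStates_defends_of_notMem (hT : ∀ u ∈ T, ∀ v ∈ T, ReachableIn G T u v)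
    (hnbr : ∀ z ∈ B, z ∉ T → ∃ w ∈ T, G.Adj z w) (hXT : X ⊆ T)
    {p : Multiset V × Finset V} (hp : p ∈ coverStates B X T) {u v : V} (hu : u ∈ T) (hv : v ∈ B)
    (hvT : v ∉ T) (huv : G.Adj u v) :
    ∃ q ∈ coverStates B X T, Transfers (Defends G u v) p q := by
  refine ⟨(v ::ₘ T.val, ∅), ⟨v, hv, .inr ⟨fun h => hvT (hXT h), rfl⟩⟩, ?_⟩
  have hTu := Multiset.cons_erase (hu : u ∈ T.val)
  obtain ⟨z, hzB, ⟨hzX, rfl⟩ | ⟨-, rfl⟩⟩ := hp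
  · have := (Defends.of_adj huv).add_right (Moves.erase_erase (hT z (hXT hzX) u hu))
    rw [Multiset.singleton_add, Multiset.singleton_add, hTu] at this
    refine ⟨_, _, this, by simp, ?_⟩
    rw [Finset.sdiff_empty, Finset.singleton_val, add_comm, Multiset.singleton_add,
      Multiset.cons_swap, Multiset.cons_erase (hXT hzX : z ∈ T.val)]
  · have := (Defends.of_adj huv).add_right (Moves.cons_erase hT hnbr hzB hu)
    rw [Multiset.singleton_add, Multiset.singleton_add, Multiset.cons_swap, hTu] at this
    exact .of_rel _ this

theorem PortStrategy.of_connected_cover (hB : B.Nonempty) (hcov : IsPortCover G B X T)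
    (hT : ∀ u ∈ T, ∀ v ∈ T, ReachableIn G T u v) (hnbr : ∀ z ∈ B, z ∉ T → ∃ w ∈ T, G.Adj z w) :
    PortStrategy G B X (T.card + 1) (coverStates B X T) := by
  have hXT := hcov.ports_subset
  have hsub : ∀ p ∈ coverStates B X T, ∀ y ∈ T, y ∈ p.1 := by
    rintro p ⟨z, -, ⟨-, rfl⟩ | ⟨-, rfl⟩⟩ y hy
    exacts [hy, Multiset.mem_cons_of_mem hy]
  refine ⟨?_, ?_, ?_, fun p hp y hy => hsub p hp y (hXT hy), fun p hp u hu v hv huv =>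
    (hcov.cover u hu v hv huv).imp (hsub p hp u) (hsub p hp v), fun p hp y hy =>
    exists_coverStates_lend hT hnbr hXT (hXT.trans hcov.subset) hp hy,
    fun p hp u hu v hv huv => ?_⟩
  · obtain ⟨z, hz⟩ := hB
    by_cases hzX : z ∈ X
    · exact ⟨_, z, hz, .inl ⟨hzX, rfl⟩⟩
    · exact ⟨_, z, hz, .inr ⟨hzX, rfl⟩⟩
  · rintro p ⟨z, -, ⟨hzX, rfl⟩ | ⟨-, rfl⟩⟩ <;> simp [*]
  · rintro p ⟨z, -, ⟨-, rfl⟩ | ⟨-, rfl⟩⟩ <;> simp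
  · by_cases huT : u ∈ T
    · by_cases hvT : v ∈ T
      · exact ⟨p, hp, .of_rel _ (.swap huv (hsub p hp u huT) (hsub p hp v hvT))⟩
      · exact exists_coverStates_defends_of_notMem hT hnbr hXT hp huT hv hvT huv
    · obtain ⟨q, hq, h⟩ := exists_coverStates_defends_of_notMem hT hnbr hXT hp
        ((hcov.cover u hu v hv huv).resolve_left huT) hu huT huv.symm
      exact ⟨q, hq, h.mono fun _ _ => Defends.symm⟩

lemma Demand.exists_isPortCover {d : V → ℕ} (hd : Demand G B X x d) (hxX : x ∈ X) (hXB : X ⊆ B) :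
    ∃ T, IsPortCover G B X T ∧ T.card ≤ 1 + ∑ v ∈ B.erase x, d v := by
  let D := (B.erase x).filter fun v => 1 ≤ d v
  have hmem : ∀ {v}, v ∈ B → (v ≠ x → 1 ≤ d v) → v ∈ insert x D := fun {v} hv h => by
    rcases eq_or_ne v x with rfl | hvx <;> simp [D, *]
  refine ⟨insert x D, ⟨?_, fun y hy => hmem (hXB hy) (hd.one_le_of_port y hy), ?_⟩, ?_⟩
  · exact Finset.insert_subset (hXB hxX)
      ((Finset.filter_subset _ _).trans (Finset.erase_subset _ _))
  · intro u hu v hv huv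
    by_cases hux : u = x
    · exact .inl (hux ▸ Finset.mem_insert_self x D)
    by_cases hvx : v = x
    · exact .inr (hvx ▸ Finset.mem_insert_self x D)
    exact (hd.cover u hu v hv huv hux hvx).imp (fun h => hmem hu fun _ => h)
      (fun h => hmem hv fun _ => h)
  · have h₁ := Finset.card_insert_le x D
    have h₂ : D.card ≤ ∑ v ∈ B.erase x, d v := by
      rw [Finset.card_filter]
      exact Finset.sum_le_sum fun v _ => by split_ifs <;> omega
    omega

theorem HasOptimalStrategy.of_connected_covers (hxX : x ∈ X) (hXB : X ⊆ B)
    (hnbr : ∀ z ∈ B, ∃ w ∈ B, G.Adj z w)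
    (hconn : ∀ T, IsPortCover G B X T → ∀ u ∈ T, ∀ v ∈ T, ReachableIn G T u v) :
    HasOptimalStrategy G B X x := by
  classical
  obtain ⟨T, hT, hmin⟩ := (B.powerset.filter (IsPortCover G B X)).exists_min_image Finset.card
    ⟨B, by simpa using ⟨subset_rfl, hXB, fun u hu _ _ _ => .inl hu⟩⟩
  have hT := (Finset.mem_filter.1 hT).2
  refine ⟨T.card + 1, _, .of_connected_cover ⟨x, hXB hxX⟩ hT (hconn T hT) fun z hz hzT => ?_,
    fun d hd => ?_⟩
  · obtain ⟨w, hw, hzw⟩ := hnbr z hz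
    exact ⟨w, (hT.cover z hz w hw hzw).resolve_left hzT, hzw⟩
  · obtain ⟨T', hT', hcard⟩ := hd.exists_isPortCover hxX hXB
    have := hmin T' (Finset.mem_filter.2 ⟨Finset.mem_powerset.2 hT'.subset, hT'⟩)
    omega

end ConnectedCover

end Demand

/-! ### Closed walks of odd length -/

section Ring

variable {G : SimpleGraph V} {k : ℕ} {π : ZMod (2 * k + 1) → V}

/-- The multiset of the vertices at the positions `j, j + 2, …, j + 2 (m - 1)` of `π`. -/
def alternate (π : ZMod (2 * k + 1) → V) (j : ZMod (2 * k + 1)) (m : ℕ) : Multiset V :=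
  ∑ t ∈ Finset.range m, {π (j + 2 * t)}

lemma two_mul_add_one_eq_zero (k : ℕ) : (2 * k + 1 : ZMod (2 * k + 1)) = 0 := by
  exact_mod_cast ZMod.natCast_self (2 * k + 1)

lemma card_alternate (π : ZMod (2 * k + 1) → V) (j : ZMod (2 * k + 1)) (m : ℕ) :
    Multiset.card (alternate π j m) = m := by
  simp [alternate]

lemma mem_alternate {j : ZMod (2 * k + 1)} {m : ℕ} {v : V} :
    v ∈ alternate π j m ↔ ∃ t < m, v = π (j + 2 * t) := by
  simp [alternate, Multiset.mem_sum]

lemma alternate_add (π : ZMod (2 * k + 1) → V) (j : ZMod (2 * k + 1)) (m m' : ℕ) :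
    alternate π j (m + m') = alternate π j m + alternate π (j + 2 * m) m' := by
  simp only [alternate, Finset.sum_range_add, Nat.cast_add, mul_add, add_assoc]

lemma alternate_moves (hstep : ∀ j, π j = π (j + 1) ∨ G.Adj (π j) (π (j + 1)))
    (j : ZMod (2 * k + 1)) (m : ℕ) : Moves G (alternate π j m) (alternate π (j + 1) m) := by
  refine .sum fun t _ => ?_
  rw [add_right_comm]
  rcases hstep (j + 2 * t) with h | h
  · exact h ▸ Moves.refl G _
  · exact (Defends.of_adj h).moves

lemma alternate_defends (hstep : ∀ j, π j = π (j + 1) ∨ G.Adj (π j) (π (j + 1)))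
    {j : ZMod (2 * k + 1)} {m t : ℕ} (ht : t < m)
    (h : G.Adj (π (j + 2 * t)) (π (j + 2 * t + 1))) :
    Defends G (π (j + 2 * t)) (π (j + 2 * t + 1)) (alternate π j m) (alternate π (j + 1) m) := by
  refine .sum (Finset.mem_range.2 ht) ?_ fun i _ _ => ?_ <;> rw [add_right_comm]
  · exact .of_adj (by rwa [add_right_comm] at h)
  · simpa [alternate] using alternate_moves hstep (j + 2 * i) 1

lemma eq_or_exists_eq_add (e j : ZMod (2 * k + 1)) :
    j = e ∨ ∃ t < k, j = e + 1 + 2 * t ∨ j = e + 2 + 2 * t := by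
  have hr : ((j - e).val : ZMod (2 * k + 1)) = j - e := ZMod.natCast_zmod_val _
  have hlt := ZMod.val_lt (j - e)
  obtain ⟨t, ht | ht⟩ := Nat.even_or_odd' (j - e).val
  · rcases t with _ | t
    · exact .inl (sub_eq_zero.1 (by rw [← hr, ht]; simp))
    · refine .inr ⟨t, by omega, .inr ?_⟩
      rw [ht] at hr
      push_cast at hr
      linear_combination -hr
  · refine .inr ⟨t, by omega, .inl ?_⟩
    rw [ht] at hr
    push_cast at hr
    linear_combination -hr

lemma val_le_alternate {H : Finset V} {j : ZMod (2 * k + 1)} {m : ℕ}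
    (h : ∀ v ∈ H, v ∈ alternate π j m) : H.val ≤ alternate π j m :=
  (Multiset.le_iff_subset H.nodup).2 h

variable [DecidableEq V] {X : Finset V} {e : ZMod (2 * k + 1)}

/-- The port, if any, that is passed twice in a row at the positions `e` and `e + 1` of `π`. -/
def ringLent (π : ZMod (2 * k + 1) → V) (X : Finset V) (e : ZMod (2 * k + 1)) : Finset V :=
  {π e} ∩ {π (e + 1)} ∩ X

/-- Guards at the positions `e + 1, e + 3, …, e + 2 k + 1 = e` of `π`, so that `e, e + 1` are the
only adjacent positions holding two guards; if these are two copies of one port, then one of the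
two guards is on loan. -/
def ringState (π : ZMod (2 * k + 1) → V) (X : Finset V) (e : ZMod (2 * k + 1)) :
    Multiset V × Finset V :=
  (alternate π (e + 1) (k + 1) - (ringLent π X e).val, ringLent π X e)

lemma eq_of_mem_ringLent {v : V} (hv : v ∈ ringLent π X e) : v = π e ∧ v = π (e + 1) := by
  simp only [ringLent, Finset.mem_inter, Finset.mem_singleton] at hv
  exact hv.1

lemma ringState_add_lent (π : ZMod (2 * k + 1) → V) (X : Finset V) (e : ZMod (2 * k + 1)) :
    (ringState π X e).1 + (ringLent π X e).val = alternate π (e + 1) (k + 1) :=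
  tsub_add_cancel_of_le <| val_le_alternate fun _ hv =>
    mem_alternate.2 ⟨0, by omega, by simpa using (eq_of_mem_ringLent hv).2⟩

lemma mem_ringState (hk : 1 ≤ k) {t : ℕ} (ht : t ≤ k) :
    π (e + 1 + 2 * t) ∈ (ringState π X e).1 := by
  set v := π (e + 1 + 2 * t)
  have hmem : v ∈ alternate π (e + 1) (k + 1) := mem_alternate.2 ⟨t, by omega, rfl⟩
  rw [← ringState_add_lent π X] at hmem
  refine (Multiset.mem_add.1 hmem).elim id fun hlent => ?_
  obtain ⟨he, he'⟩ := eq_of_mem_ringLent hlent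
  have hcount := congrArg (Multiset.count v) (ringState_add_lent π X e)
  rw [add_comm k, alternate_add, Multiset.count_add, Multiset.count_add,
    Multiset.count_eq_one_of_mem (ringLent π X e).nodup hlent] at hcount
  have h₁ : 1 ≤ (alternate π (e + 1) 1).count v :=
    Multiset.one_le_count_iff_mem.2 (mem_alternate.2 ⟨0, by omega, by simpa using he'⟩)
  have h₂ : 1 ≤ (alternate π (e + 1 + 2 * (1 : ℕ)) k).count v := by
    refine Multiset.one_le_count_iff_mem.2 (mem_alternate.2 ⟨k - 1, by omega, he.trans ?_⟩)
    congr 1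
    push_cast [hk]
    linear_combination -two_mul_add_one_eq_zero k
  exact Multiset.one_le_count_iff_mem.1 (by omega)

lemma mem_ringState_self (hk : 1 ≤ k) : π e ∈ (ringState π X e).1 := by
  convert mem_ringState (π := π) (e := e) (X := X) hk le_rfl using 2
  linear_combination -two_mul_add_one_eq_zero k

lemma mem_ringState_succ (hk : 1 ≤ k) : π (e + 1) ∈ (ringState π X e).1 := by
  convert mem_ringState (π := π) (e := e) (X := X) hk (Nat.zero_le k) using 2
  simp

lemma mem_ringState_or_mem (hk : 1 ≤ k) (e j : ZMod (2 * k + 1)) :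
    π j ∈ (ringState π X e).1 ∨ π (j + 1) ∈ (ringState π X e).1 := by
  obtain rfl | ⟨t, ht, rfl | rfl⟩ := eq_or_exists_eq_add e j
  · exact .inl (mem_ringState_self hk)
  · exact .inl (mem_ringState hk ht.le)
  · refine .inr ?_
    convert mem_ringState (π := π) (e := e) (X := X) hk (show t + 1 ≤ k by omega) using 2
    push_cast
    ring

/-- The guards at `e + 1, e + 3, …, e + 2 s - 1` advance by one position and the others stay; the
lent guards are among those that stay. -/
lemma ringState_transfers {r : Multiset V → Multiset V → Prop} {s : ℕ} (hs : s ≤ k)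
    (hr : ∀ R, r (alternate π (e + 1) s + R) (alternate π (e + 1 + 1) s + R)) :
    Transfers r (ringState π X e) (ringState π X (e + 2 * s)) := by
  have hk := two_mul_add_one_eq_zero k
  have hsub : ∀ v ∈ ringLent π X e ∪ ringLent π X (e + 2 * s),
      v ∈ alternate π (e + 2 * s + 1) (k + 1 - s) := fun v hv => by
    rw [mem_alternate]
    rcases Finset.mem_union.1 hv with hv | hv
    · refine ⟨k - s, by omega, (eq_of_mem_ringLent hv).1.trans (congrArg π ?_)⟩
      push_cast [hs]
      linear_combination -hk
    · exact ⟨0, by omega, by simpa using (eq_of_mem_ringLent hv).2⟩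
  obtain ⟨R, hR⟩ := Multiset.le_iff_exists_add.1 (val_le_alternate hsub)
  rw [add_comm _ R] at hR
  refine .of_total (hr R) ?_ ?_
  · rw [add_assoc, ← hR]
    refine (ringState_add_lent π X e).trans ?_
    rw [show k + 1 = s + (k + 1 - s) by omega, alternate_add, Nat.add_sub_cancel_left,
      add_right_comm]
  · rw [add_assoc (alternate _ _ s), ← hR, add_comm (alternate _ _ s)]
    refine (ringState_add_lent π X (e + 2 * s)).trans ?_
    rw [show k + 1 = k + 1 - s + s by omega, alternate_add, Nat.add_sub_cancel]
    congr 2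
    push_cast [hs.trans k.le_succ]
    linear_combination hk

lemma ringState_moves (hstep : ∀ j, π j = π (j + 1) ∨ G.Adj (π j) (π (j + 1)))
    (e j : ZMod (2 * k + 1)) : Transfers (Moves G) (ringState π X e) (ringState π X j) := by
  have forward : ∀ (i : ZMod (2 * k + 1)) {s}, s ≤ k →
      Transfers (Moves G) (ringState π X i) (ringState π X (i + 2 * s)) := fun i _ hs =>
    ringState_transfers hs fun R => (alternate_moves hstep _ _).add (Moves.refl G R)
  obtain rfl | ⟨t, ht, rfl | rfl⟩ := eq_or_exists_eq_add e j
  · exact .of_rel _ (Moves.refl G _)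
  · refine .reverse (fun _ _ => Moves.symm) ?_
    convert forward (e + 1 + 2 * t) (s := k - t) (by omega) using 2
    push_cast [ht.le]
    linear_combination -two_mul_add_one_eq_zero k
  · convert forward e (s := t + 1) (by omega) using 2
    push_cast
    ring

lemma ringState_defends (hk : 1 ≤ k)
    (hstep : ∀ j, π j = π (j + 1) ∨ G.Adj (π j) (π (j + 1))) (e : ZMod (2 * k + 1))
    {j : ZMod (2 * k + 1)} (hj : G.Adj (π j) (π (j + 1))) :
    ∃ e', Transfers (Defends G (π j) (π (j + 1))) (ringState π X e) (ringState π X e') := by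
  have forward : ∀ {i : ZMod (2 * k + 1)} {t}, t < k → j = i + 1 + 2 * t →
      Transfers (Defends G (π j) (π (j + 1))) (ringState π X i) (ringState π X (i + 2 * k)) := by
    rintro i t ht rfl
    exact ringState_transfers le_rfl fun R => (alternate_defends hstep ht hj).add_right (.refl G R)
  obtain rfl | ⟨t, ht, h | h⟩ := eq_or_exists_eq_add e j
  · exact ⟨j, .of_rel _ (.swap hj (mem_ringState_self hk) (mem_ringState_succ hk))⟩
  · exact ⟨_, forward ht h⟩
  · refine ⟨e + 1, .reverse (fun _ _ => Defends.reverse) ?_⟩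
    convert forward (i := e + 1) ht (by linear_combination h) using 2
    linear_combination -two_mul_add_one_eq_zero k

theorem PortStrategy.of_closed_walk {B : Finset V} (hk : 1 ≤ k)
    (hstep : ∀ j, π j = π (j + 1) ∨ G.Adj (π j) (π (j + 1)))
    (hport : ∀ y ∈ X, ∃ j, π j = y ∧ π (j + 1) = y)
    (hedge : ∀ u ∈ B, ∀ v ∈ B, G.Adj u v →
      ∃ j, (π j = u ∧ π (j + 1) = v) ∨ (π j = v ∧ π (j + 1) = u)) :
    PortStrategy G B X (k + 1) (Set.range (ringState π X)) where
  nonempty := Set.range_nonempty _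
  lent_subset := by
    rintro _ ⟨e, rfl⟩
    exact Finset.inter_subset_right
  card_add_card := by
    rintro _ ⟨e, rfl⟩
    rw [← card_alternate π (e + 1) (k + 1), ← ringState_add_lent π X, Multiset.card_add]
    rfl
  port_mem := by
    rintro _ ⟨e, rfl⟩ y hy
    obtain ⟨j, rfl, hj⟩ := hport y hy
    simpa [hj] using mem_ringState_or_mem (π := π) (X := X) hk e j
  cover := by
    rintro _ ⟨e, rfl⟩ u hu v hv huv
    obtain ⟨j, ⟨rfl, rfl⟩ | ⟨rfl, rfl⟩⟩ := hedge u hu v hv huv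
    exacts [mem_ringState_or_mem hk e j, (mem_ringState_or_mem hk e j).symm]
  lend := by
    rintro _ ⟨e, rfl⟩ y hy
    obtain ⟨j, hj, hj'⟩ := hport y hy
    exact ⟨_, ⟨j, rfl⟩, by simp [ringState, ringLent, hj, hj', hy], ringState_moves hstep e j⟩
  defend := by
    rintro _ ⟨e, rfl⟩ u hu v hv huv
    obtain ⟨j, ⟨rfl, rfl⟩ | ⟨rfl, rfl⟩⟩ := hedge u hu v hv huv
    · obtain ⟨e', h⟩ := ringState_defends (X := X) hk hstep e huv
      exact ⟨_, ⟨e', rfl⟩, h⟩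
    · obtain ⟨e', h⟩ := ringState_defends (X := X) hk hstep e huv.symm
      exact ⟨_, ⟨e', rfl⟩, h.mono fun _ _ => Defends.symm⟩

end Ring

/-! ### Cycle blocks -/

section Steps

variable {w : ℕ → V} {n : ℕ}

/-- The pairs of consecutive terms among `σ 0, …, σ N`. -/
def steps (σ : ℕ → V) (N : ℕ) : Set (V × V) :=
  (fun i => (σ i, σ (i + 1))) '' Set.Iio N

lemma steps_succ (σ : ℕ → V) (N : ℕ) : steps σ (N + 1) = insert (σ N, σ (N + 1)) (steps σ N) := by
  rw [steps, ← Order.succ_eq_add_one, Order.Iio_succ_eq_insert, Set.image_insert_eq, steps]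
  rfl

lemma exists_steps_eq_insert (σ : ℕ → V) (N : ℕ) (v : V) :
    ∃ σ' : ℕ → V, σ' 0 = σ 0 ∧ σ' (N + 1) = v ∧
      steps σ' (N + 1) = insert (σ N, v) (steps σ N) := by
  refine ⟨Function.update σ (N + 1) v, by simp, by simp, ?_⟩
  rw [steps_succ, Function.update_self, Function.update_of_ne (by omega)]
  congr 1
  refine Set.image_congr fun i (hi : i < N) => ?_
  rw [Function.update_of_ne (by omega), Function.update_of_ne (by omega)]

lemma exists_steps_eq_union [DecidableEq V] (w : ℕ → V) (D : Finset V) (n : ℕ) :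
    ∃ σ : ℕ → V, let N := n + ((Finset.range n).filter (w · ∈ D)).card
      σ 0 = w 0 ∧ σ N = w n ∧ steps σ N = steps w n ∪ {p | ∃ i < n, w i ∈ D ∧ p = (w i, w i)} := by
  induction n with
  | zero => exact ⟨w, rfl, rfl, by simp [steps]⟩
  | succ n ih =>
    obtain ⟨σ, h0, hN, hσ⟩ := ih
    rw [Finset.range_add_one, Finset.filter_insert, steps_succ]
    generalize hc : ((Finset.range n).filter (w · ∈ D)).card = c at hN hσ
    obtain ⟨σ₁, h0₁, hN₁, hσ₁⟩ := exists_steps_eq_insert σ (n + c)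
      (if w n ∈ D then w n else w (n + 1))
    rw [hN, hσ] at hσ₁
    split_ifs at hN₁ hσ₁ ⊢ with hD
    · obtain ⟨σ₂, h0₂, hN₂, hσ₂⟩ := exists_steps_eq_insert σ₁ (n + c + 1) (w (n + 1))
      rw [Finset.card_insert_of_notMem (by simp), hc, add_add_add_comm n 1 c 1]
      refine ⟨σ₂, by rw [h0₂, h0₁, h0], hN₂, ?_⟩
      rw [← add_assoc, hσ₂, hN₁, hσ₁]
      ext p
      simp only [Set.mem_insert_iff, Set.mem_union, Set.mem_ofPred_eq, Nat.lt_succ_iff_lt_or_eq,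
        or_and_right, exists_or, exists_eq_left, hD, true_and]
      exact iff_of_eq (by ac_rfl)
    · refine ⟨σ₁, by rw [h0₁, h0], by rw [← hN₁, hc, add_right_comm], ?_⟩
      rw [hc, add_right_comm, hσ₁, Set.insert_union]
      ext p
      simp only [Set.mem_insert_iff, Set.mem_union, Set.mem_ofPred_eq, Nat.lt_succ_iff_lt_or_eq,
        or_and_right, exists_or, exists_eq_left, hD, false_and, or_false]

lemma range_val_pairs_eq_steps {σ : ℕ → V} {k : ℕ} (hσ : σ (2 * k + 1) = σ 0) :
    Set.range (fun j : ZMod (2 * k + 1) => (σ j.val, σ (j + 1).val)) = steps σ (2 * k + 1) := by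
  have hcast : ∀ i < 2 * k + 1, (fun j : ZMod (2 * k + 1) => (σ j.val, σ (j + 1).val)) i =
      (σ i, σ (i + 1)) := fun i hi => by
    have hsucc : ((i : ZMod (2 * k + 1)) + 1).val = (i + 1) % (2 * k + 1) := by
      rw [← ZMod.val_natCast, Nat.cast_succ]
    simp only [hsucc, ZMod.val_natCast_of_lt hi, Prod.mk.injEq, true_and]
    rcases (Nat.succ_le_of_lt hi).lt_or_eq with h | h
    · rw [Nat.mod_eq_of_lt h]
    · rw [show i + 1 = 2 * k + 1 from h, Nat.mod_self, hσ]
  ext p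
  constructor
  · rintro ⟨j, rfl⟩
    exact ⟨j.val, ZMod.val_lt j,
      (hcast _ (ZMod.val_lt j)).symm.trans (by rw [ZMod.natCast_zmod_val])⟩
  · rintro ⟨i, hi, rfl⟩
    exact ⟨i, hcast i hi⟩

end Steps

/-- A vertex `i` costs one unit, or two if `χ i`, and is paid `2 * δ i` units. Deficits occur only
where `δ i = 0`, and by `hδ` any two of them are separated by a surplus. -/
lemma add_card_filter_le_two_mul_sum {χ : ℕ → Prop} [DecidablePred χ] {δ : ℕ → ℕ} (m : ℕ)
    (hχ : ∀ i < m, χ i → 1 ≤ δ i)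
    (hδ : ∀ q t, q < t → t < m → ¬ χ q → δ q = 0 → ¬ χ t → δ t = 0 →
      ¬ ∀ i, q < i → i < t → χ i ∧ δ i ≤ 1) :
    m + ((Finset.range m).filter χ).card ≤ 2 * ∑ i ∈ Finset.range m, δ i + 1 := by
  suffices ∀ t ≤ m, (t + ((Finset.range t).filter χ).card ≤ 2 * ∑ i ∈ Finset.range t, δ i) ∨
      (t + ((Finset.range t).filter χ).card ≤ 2 * (∑ i ∈ Finset.range t, δ i) + 1 ∧
        ∃ q < t, ¬ χ q ∧ δ q = 0 ∧ ∀ i, q < i → i < t → χ i ∧ δ i ≤ 1) by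
    obtain h | ⟨h, -⟩ := this m le_rfl <;> omega
  intro t
  induction t with
  | zero => simp
  | succ t ih =>
    intro ht
    rw [Finset.sum_range_succ, Finset.range_add_one, Finset.filter_insert]
    by_cases ht' : χ t
    · rw [if_pos ht', Finset.card_insert_of_notMem (by simp)]
      have := hχ t ht ht'
      obtain h | ⟨h, q, hqt, hq, hq0, hrun⟩ := ih (by omega)
      · exact .inl (by omega)
      by_cases h1 : δ t ≤ 1
      · refine .inr ⟨by omega, q, by omega, hq, hq0, fun i hqi hit => ?_⟩
        rcases Nat.lt_succ_iff_lt_or_eq.1 hit with hit | rfl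
        exacts [hrun i hqi hit, ⟨ht', h1⟩]
      · exact .inl (by omega)
    · rw [if_neg ht']
      obtain h | ⟨h, q, hqt, hq, hq0, hrun⟩ := ih (by omega)
      · by_cases h0 : δ t = 0
        · exact .inr ⟨by omega, t, by omega, ht', h0, fun i _ _ => by omega⟩
        · exact .inl (by omega)
      · have h0 : δ t ≠ 0 := fun h0 => hδ q t hqt ht hq hq0 ht' h0 hrun
        exact .inl (by omega)

lemma IsCycleSet.exists_cycle {G : SimpleGraph V} {S : Set V} (h : IsCycleSet G S) {x : V}
    (hx : x ∈ S) :
    ∃ c : G.Walk x x, c.IsCycle ∧ (∀ v, v ∈ c.support ↔ v ∈ S) ∧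
      ∀ u ∈ S, ∀ v ∈ S, G.Adj u v → c.toSubgraph.Adj u v := by
  classical
  obtain ⟨a, c, hc, rfl, hchord⟩ := h
  refine ⟨c.rotate x hx, hc.rotate hx, fun v => ?_, fun u hu v hv huv => ?_⟩
  · rw [← Walk.mem_verts_toSubgraph, c.toSubgraph_rotate, Walk.mem_verts_toSubgraph]
    rfl
  · rw [c.toSubgraph_rotate, Walk.adj_toSubgraph_iff_mem_edges]
    exact hchord u v hu hv huv

section CyclicEnumeration

variable [DecidableEq V] {G : SimpleGraph V} {B X : Finset V} {x : V} {n : ℕ} {w : ℕ → V}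

/-- `w 0 = x, w 1, …, w n = x` runs once around `B`, which induces a cycle of `G`. -/
structure CyclicEnumeration (G : SimpleGraph V) (B : Finset V) (x : V) (n : ℕ) (w : ℕ → V) :
    Prop where
  three_le : 3 ≤ n
  start : w 0 = x
  finish : w n = x
  adj : ∀ i < n, G.Adj (w i) (w (i + 1))
  injOn : Set.InjOn w (Set.Iio n)
  image_eq : (Finset.range n).image w = B
  edge : ∀ u ∈ B, ∀ v ∈ B, G.Adj u v →
    ∃ i < n, (w i = u ∧ w (i + 1) = v) ∨ (w i = v ∧ w (i + 1) = u)

namespace CyclicEnumeration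

lemma mem (h : CyclicEnumeration G B x n w) {i : ℕ} (hi : i < n) : w i ∈ B :=
  h.image_eq ▸ Finset.mem_image_of_mem w (Finset.mem_range.2 hi)

lemma exists_eq (h : CyclicEnumeration G B x n w) {v : V} (hv : v ∈ B) : ∃ i < n, w i = v := by
  simpa [← h.image_eq] using hv

lemma ne_root (h : CyclicEnumeration G B x n w) {i : ℕ} (hi : 0 < i) (hin : i < n) : w i ≠ x := by
  rw [← h.start]
  exact fun hwi => hi.ne' (h.injOn hin (hi.trans hin) hwi)

lemma eq_or_eq_of_adj (h : CyclicEnumeration G B x n w) {i : ℕ} (hi : 0 < i) (hin : i < n) {u : V}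
    (hu : u ∈ B) (hadj : G.Adj (w i) u) : u = w (i - 1) ∨ u = w (i + 1) := by
  obtain ⟨j, hj, ⟨hji, rfl⟩ | ⟨rfl, hji⟩⟩ := h.edge _ (h.mem hin) u hu hadj
  · exact .inr (by rw [h.injOn hj hin hji])
  · rcases (Nat.succ_le_of_lt hj).lt_or_eq with hj' | hj'
    · exact .inl (by rw [← h.injOn hj' hin hji, Nat.succ_sub_one])
    · rw [show j + 1 = n from hj', h.finish] at hji
      exact absurd hji.symm (h.ne_root hi hin)

lemma sum_erase (h : CyclicEnumeration G B x n w) (f : V → ℕ) :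
    ∑ v ∈ B.erase x, f v = ∑ i ∈ Finset.range (n - 1), f (w (i + 1)) := by
  have h3 := h.three_le
  have hx : x ∈ B := h.start ▸ h.mem (by omega)
  have hsum : ∑ v ∈ B, f v = ∑ i ∈ Finset.range (n - 1 + 1), f (w i) := by
    rw [Nat.sub_add_cancel (by omega), ← h.image_eq, Finset.sum_image]
    exact fun i hi j hj => h.injOn (Finset.mem_range.1 hi) (Finset.mem_range.1 hj)
  rw [Finset.sum_range_succ', h.start, ← Finset.sum_erase_add _ _ hx] at hsum
  exact add_right_cancel hsum

lemma card_filter (h : CyclicEnumeration G B x n w) {D : Finset V} (hD : D ⊆ B) :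
    ((Finset.range n).filter (w · ∈ D)).card = D.card := by
  rw [← Finset.card_image_of_injOn (f := w), ← Finset.filter_image (p := (· ∈ D)), h.image_eq,
    Finset.filter_mem_eq_inter, Finset.inter_eq_right.2 hD]
  exact h.injOn.mono fun i hi => Finset.mem_range.1 (Finset.mem_filter.1 hi).1

/-- The walk around the cycle becomes a closed walk of odd length when it waits at every port and,
if parity requires it, at one further vertex. -/
theorem exists_portStrategy (h : CyclicEnumeration G B x n w) (hXB : X ⊂ B) :
    ∃ T, PortStrategy G B X ((n + X.card) / 2 + 1) T := by
  have h3 := h.three_le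
  obtain ⟨D, hXD, hDB, hcard⟩ :
      ∃ D, X ⊆ D ∧ D ⊆ B ∧ n + D.card = 2 * ((n + X.card) / 2) + 1 := by
    rcases Nat.even_or_odd (n + X.card) with heven | hodd
    · obtain ⟨v, hv, hvX⟩ := Finset.exists_of_ssubset hXB
      refine ⟨insert v X, Finset.subset_insert v X, Finset.insert_subset hv hXB.1, ?_⟩
      rw [Finset.card_insert_of_notMem hvX]
      have := Nat.even_iff.1 heven
      omega
    · exact ⟨X, subset_rfl, hXB.1, by have := Nat.odd_iff.1 hodd; omega⟩
  obtain ⟨σ, h0, hN, hσ⟩ := exists_steps_eq_union w D n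
  set k := (n + X.card) / 2 with hk
  rw [h.card_filter hDB, hcard] at hN hσ
  rw [← range_val_pairs_eq_steps (by rw [hN, h0, h.start, h.finish])] at hσ
  have exists_pos : ∀ {u v}, (u, v) ∈ steps w n ∪ {p | ∃ i < n, w i ∈ D ∧ p = (w i, w i)} →
      ∃ j : ZMod (2 * k + 1), σ j.val = u ∧ σ (j + 1).val = v := fun huv => by
    obtain ⟨j, hj⟩ := hσ ▸ huv
    exact ⟨j, Prod.ext_iff.1 hj⟩
  refine ⟨_, .of_closed_walk (π := fun j => σ j.val) (by omega) (fun j => ?_) (fun y hy => ?_) ?_⟩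
  · obtain ⟨i, hi, hij⟩ | ⟨i, -, -, hij⟩ := hσ.subset (Set.mem_range_self j) <;>
      simp only [Prod.mk.injEq] at hij
    · exact .inr (hij.1 ▸ hij.2 ▸ h.adj i hi)
    · exact .inl (hij.1.trans hij.2.symm)
  · obtain ⟨i, hi, rfl⟩ := h.exists_eq (hXB.1 hy)
    exact exists_pos (.inr ⟨i, hi, hXD hy, rfl⟩)
  · intro u hu v hv huv
    obtain ⟨i, hi, ⟨rfl, rfl⟩ | ⟨rfl, rfl⟩⟩ := h.edge u hu v hv huv
    · exact (exists_pos (.inl ⟨i, hi, rfl⟩)).imp fun _ => .inl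
    · exact (exists_pos (.inl ⟨i, hi, rfl⟩)).imp fun _ => .inr

lemma not_forall_mem_Ioo (h : CyclicEnumeration G B x n w) {d : V → ℕ} (hd : Demand G B X x d)
    {q t : ℕ} (hq : 0 < q) (hqt : q < t) (ht : t < n) (hqX : w q ∉ X) (hq0 : d (w q) = 0)
    (htX : w t ∉ X) (ht0 : d (w t) = 0) :
    ¬ ∀ i, q < i → i < t → w i ∈ X ∧ d (w i) ≤ 1 := by
  intro hrun
  have hne : q + 1 ≠ t := by
    rintro rfl
    have := hd.cover _ (h.mem (by omega)) _ (h.mem ht) (h.adj q (by omega))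
      (h.ne_root hq (by omega)) (h.ne_root (by omega) ht)
    omega
  have hadj : G.Adj (w (t - 1)) (w t) := by
    simpa [Nat.sub_add_cancel (by omega : 1 ≤ t)] using h.adj (t - 1) (by omega)
  have memY : ∀ {v}, v ∈ (Finset.Ioo q t).image w ↔ ∃ i, (q < i ∧ i < t) ∧ w i = v := by simp
  have hsub : (Finset.Ioo q t).image w ⊆ X.erase x := fun y hy => by
    obtain ⟨i, hi, rfl⟩ := memY.1 hy
    exact Finset.mem_erase.2 ⟨h.ne_root (by omega) (by omega), (hrun i hi.1 hi.2).1⟩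
  have hclosed : ∀ {i}, q ≤ i → i ≤ t →
      w i ∈ (Finset.Ioo q t).image w ∨ w i ∉ X ∧ d (w i) = 0 := fun {i} hqi hit => by
    rcases hqi.eq_or_lt with rfl | hqi
    · exact .inr ⟨hqX, hq0⟩
    rcases hit.eq_or_lt with rfl | hit
    exacts [.inr ⟨htX, ht0⟩, .inl (memY.2 ⟨i, ⟨hqi, hit⟩, rfl⟩)]
  obtain ⟨y, hy, hy2⟩ := hd.two_le _ hsub (w (t - 1)) (memY.2 ⟨t - 1, by omega, rfl⟩) (w t)
    (h.mem ht) (fun hmem => htX (Finset.mem_of_mem_erase (hsub hmem))) hadj fun y hy u hu hyu => by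
      obtain ⟨i, hi, rfl⟩ := memY.1 hy
      rcases h.eq_or_eq_of_adj (by omega) (by omega) hu hyu with rfl | rfl <;>
        exact hclosed (by omega) (by omega)
  obtain ⟨i, hi, rfl⟩ := memY.1 hy
  have := (hrun i hi.1 hi.2).2
  omega

theorem hasOptimalStrategy (h : CyclicEnumeration G B x n w) (hxX : x ∈ X) (hXB : X ⊂ B) :
    HasOptimalStrategy G B X x := by
  obtain ⟨T, hT⟩ := h.exists_portStrategy hXB
  refine ⟨_, T, hT, fun d hd => ?_⟩
  have h3 := h.three_le
  have hcount := add_card_filter_le_two_mul_sum (χ := fun i => w (i + 1) ∈ X)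
    (δ := fun i => d (w (i + 1))) (n - 1)
    (fun i hi hiX => hd.one_le_of_port _ hiX (h.ne_root (by omega) (by omega))) ?_
  · rw [← h.sum_erase d, Finset.card_filter, ← h.sum_erase fun v => if v ∈ X then 1 else 0,
      ← Finset.card_filter, Finset.filter_mem_eq_inter, Finset.erase_inter,
      Finset.inter_eq_right.2 hXB.1, Finset.card_erase_of_mem hxX] at hcount
    have := Finset.card_pos.2 ⟨x, hxX⟩
    omega
  · intro q t hqt ht hqX hq0 htX ht0 hrun
    refine h.not_forall_mem_Ioo hd q.succ_pos (Nat.succ_lt_succ hqt) (by omega) hqX hq0 htX ht0 ?_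
    intro i hqi hit
    have := hrun (i - 1) (by omega) (by omega)
    rwa [Nat.sub_add_cancel (by omega)] at this

end CyclicEnumeration

lemma IsCycleSet.exists_cyclicEnumeration (h : IsCycleSet G B) (hx : x ∈ B) :
    ∃ n w, CyclicEnumeration G B x n w := by
  obtain ⟨c, hc, hmem, hedge⟩ := h.exists_cycle hx
  refine ⟨c.length, c.getVert, hc.three_le_length, by simp, by simp,
    fun i hi => c.adj_getVert_succ hi, fun i hi j hj => ?_, ?_, fun u hu v hv huv => ?_⟩
  · exact hc.getVert_injOn' (Nat.le_sub_one_of_lt hi) (Nat.le_sub_one_of_lt hj)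
  · ext v
    rw [← Finset.mem_coe (s := B), ← hmem v, Walk.mem_support_iff_exists_getVert]
    simp only [Finset.mem_image, Finset.mem_range]
    refine ⟨fun ⟨i, hi, hv⟩ => ⟨i, hv, hi.le⟩, fun ⟨i, hv, hi⟩ => ?_⟩
    rcases hi.eq_or_lt with rfl | hi
    · exact ⟨0, by have := hc.three_le_length; omega, by simpa using hv⟩
    · exact ⟨i, hi, hv⟩
  · obtain ⟨i, hi, hlt⟩ := c.toSubgraph_adj_iff.1 (hedge u hu v hv huv)
    exact ⟨i, hlt, Sym2.eq_iff.1 hi⟩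

end CyclicEnumeration

/-! ### Chordal blocks -/

section Chordal

variable {G : SimpleGraph V} {a b i : V}

lemma exists_length_lt_of_adj_getVert (q : G.Walk a b) {j k : ℕ} (hjk : j + 2 ≤ k)
    (hk : k ≤ q.length) (h : G.Adj (q.getVert j) (q.getVert k)) :
    ∃ q' : G.Walk a b, q'.length < q.length ∧ q'.support ⊆ q.support := by
  refine ⟨(q.take j).append (.cons h (q.drop k)), ?_, fun v hv => ?_⟩
  · rw [Walk.length_append, Walk.length_cons, Walk.take_length, Walk.drop_length]
    omega
  · rw [Walk.mem_support_append_iff, Walk.support_cons, List.mem_cons] at hv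
    rcases hv with hv | rfl | hv
    · exact (q.isSubwalk_take j).support_subset hv
    · exact q.getVert_mem_support j
    · exact (q.isSubwalk_drop k).support_subset hv

lemma exists_length_lt_of_chord (q : G.Walk a b) {u v : V} (hu : u ∈ q.support)
    (hv : v ∈ q.support) (huv : G.Adj u v) (he : s(u, v) ∉ q.edges) :
    ∃ q' : G.Walk a b, q'.length < q.length ∧ q'.support ⊆ q.support := by
  obtain ⟨j, rfl, hj⟩ := Walk.mem_support_iff_exists_getVert.1 hu
  obtain ⟨k, rfl, hk⟩ := Walk.mem_support_iff_exists_getVert.1 hv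
  rw [← Walk.adj_toSubgraph_iff_mem_edges, Walk.toSubgraph_adj_iff] at he
  have hne : j ≠ k := by rintro rfl; exact huv.ne rfl
  have hkj : k ≠ j + 1 := by rintro rfl; exact he ⟨j, rfl, by omega⟩
  have hjk : j ≠ k + 1 := by rintro rfl; exact he ⟨k, Sym2.eq_swap, by omega⟩
  rcases (by omega : j + 2 ≤ k ∨ k + 2 ≤ j) with h | h
  · exact exists_length_lt_of_adj_getVert q h hk huv
  · exact exists_length_lt_of_adj_getVert q h hj huv.symm

lemma isCycle_cons_concat {q : G.Walk a b} (hq : q.IsPath) (hi : i ∉ q.support) (hia : G.Adj i a)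
    (hib : G.Adj i b) (hab : a ≠ b) : (Walk.cons hia (q.concat hib.symm)).IsCycle := by
  refine (Walk.cons_isCycle_iff _ _).2 ⟨hq.concat hi _, fun h => ?_⟩
  rw [Walk.edges_concat, List.concat_eq_append, List.mem_append, List.mem_singleton] at h
  rcases h with h | h
  · exact hi (q.fst_mem_support_of_mem_edges h)
  · rcases Sym2.eq_iff.1 h with ⟨h, -⟩ | ⟨-, h⟩
    exacts [hib.ne h, hab h]

lemma IsChordal.exists_chord_or_adj (hG : IsChordal G) {q : G.Walk a b} (hq : q.IsPath)
    (hlen : 2 ≤ q.length) (hi : i ∉ q.support) (hia : G.Adj i a) (hib : G.Adj i b) :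
    (∃ u ∈ q.support, ∃ v ∈ q.support, G.Adj u v ∧ s(u, v) ∉ q.edges) ∨
      ∃ v ∈ q.support, G.Adj i v ∧ v ≠ a ∧ v ≠ b := by
  have hab : a ≠ b := by
    rintro rfl
    rw [Walk.isPath_iff_nil, ← Walk.length_eq_zero_iff] at hq
    omega
  obtain ⟨u, v, hu, hv, huv, he⟩ := hG i _ (isCycle_cons_concat hq hi hia hib hab) (by
    rw [Walk.length_cons, Walk.length_concat]; omega)
  simp only [Walk.support_cons, Walk.support_concat, Walk.edges_cons, Walk.edges_concat,
    List.concat_eq_append, List.mem_cons, List.mem_append, Sym2.eq_iff, List.not_mem_nil,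
    or_false] at hu hv he
  have hne := huv.ne
  have hsymm := huv.symm
  grind

lemma IsChordal.reachableIn_neighborSet (hG : IsChordal G) (p : G.Walk a b) (hi : i ∉ p.support)
    (hia : G.Adj i a) (hib : G.Adj i b) : ReachableIn G (G.neighborSet i) a b := by
  classical
  induction hn : p.length using Nat.strong_induction_on generalizing a b with
  | _ n ih =>
    subst hn
    obtain ⟨q, hq, hqp, hqi⟩ : ∃ q : G.Walk a b, q.IsPath ∧ q.length ≤ p.length ∧ i ∉ q.support :=
      ⟨p.bypass, p.bypass_isPath, p.length_bypass_le_length,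
        fun h => hi (p.support_bypass_subset_support h)⟩
    rcases (by omega : q.length = 0 ∨ q.length = 1 ∨ 2 ≤ q.length) with hlen | hlen | hlen
    · exact Walk.eq_of_length_eq_zero hlen ▸ .refl G hia
    · exact .of_adj (Walk.adj_of_length_eq_one hlen) hia hib
    obtain ⟨u, hu, v, hv, huv, he⟩ | ⟨v, hv, hiv, hva, hvb⟩ :=
      hG.exists_chord_or_adj hq hlen hqi hia hib
    · obtain ⟨q', hlt, hsub⟩ := exists_length_lt_of_chord q hu hv huv he
      exact ih _ (hlt.trans_le hqp) q' (fun h => hqi (hsub h)) hia hib rfl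
    · have hlt := q.length_takeUntil_lt_length hv hvb
      have hadd := congrArg Walk.length (q.take_spec hv)
      rw [Walk.length_append] at hadd
      have hpos : (q.takeUntil v hv).length ≠ 0 :=
        fun h => hva (Walk.eq_of_length_eq_zero h).symm
      exact (ih _ (by omega) (q.takeUntil v hv)
          (fun h => hqi (q.support_takeUntil_subset_support hv h)) hia hiv rfl).trans
        (ih _ (by omega) (q.dropUntil v hv)
          (fun h => hqi (q.support_dropUntil_subset_support hv h)) hiv hib rfl)

-- A walk can be rerouted around every vertex outside the cover, inside its neighbourhood.
theorem IsChordal.reachableIn_of_isCover (hG : IsChordal G) (hc : G.Connected)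
    (hcut : ∀ x, ¬ IsCutVertex G x) {T : Set V} (hT : IsCover G T) {s t : V} (hs : s ∈ T)
    (ht : t ∈ T) : ReachableIn G T s t := by
  have hdetour : ∀ i ∉ T, ∀ a b, G.Adj i a → G.Adj i b → ReachableIn G T a b := by
    intro i hi a b hia hib
    obtain ⟨p⟩ : (delVert G i).Reachable ⟨a, hia.ne'⟩ ⟨b, hib.ne'⟩ := by
      by_contra h
      exact hcut i ⟨a, b, _, _, hc.preconnected a b, h⟩
    have hsupp : i ∉ (p.map (Embedding.induce _).toHom).support := by
      rw [Walk.support_map, List.mem_map]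
      rintro ⟨y, -, hy⟩
      exact y.2 hy
    exact (hG.reachableIn_neighborSet _ hsupp hia hib).mono fun v hv => (hT hv).resolve_left hi
  obtain ⟨p⟩ := hc.preconnected s t
  suffices (t ∈ T → ReachableIn G T s t) ∧ (t ∉ T → ∀ a, G.Adj t a → ReachableIn G T s a) from
    this.1 ht
  have huniv : ReachableIn G Set.univ s t := ⟨p, fun z _ => Set.mem_univ z⟩
  refine huniv.induction (P := fun t => (t ∈ T → ReachableIn G T s t) ∧
    (t ∉ T → ∀ a, G.Adj t a → ReachableIn G T s a)) ⟨.refl G, fun h => absurd hs h⟩ ?_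
  rintro v w - - hvw ⟨hv, hv'⟩
  refine ⟨fun hw => ?_, fun hw a hwa => ?_⟩
  · by_cases hvT : v ∈ T
    · exact (hv hvT).trans (.of_adj hvw hvT hw)
    · exact hv' hvT w hvw
  · exact (hv ((hT hvw).resolve_right hw)).trans (hdetour w hw v a hvw.symm hwa)

end Chordal

/-! ### The permitted blocks have optimal strategies -/

lemma ReachableIn.of_induce {G : SimpleGraph V} {S : Set V} {T : Set S} {T' : Set V}
    (hT : ∀ z ∈ T, z.1 ∈ T') {u v : S} : ReachableIn (G.induce S) T u v → ReachableIn G T' u v := by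
  rintro ⟨p, hp⟩
  refine ⟨p.map (Embedding.induce S).toHom, fun z hz => ?_⟩
  obtain ⟨y, hy, rfl⟩ := List.mem_map.1 (Walk.support_map _ p ▸ hz)
  exact hT y (hp y hy)

section Block

variable [DecidableEq V] {G : SimpleGraph V} {B X : Finset V} {x : V}

theorem HasOptimalStrategy.of_isCycleSet (hB : ∀ u ∈ B, ∀ v ∈ B, ReachableIn G B u v)
    (hnbr : ∀ z ∈ B, ∃ w ∈ B, G.Adj z w) (hxX : x ∈ X) (hXB : X ⊆ B)
    (h : IsCycleSet G (B : Set V)) : HasOptimalStrategy G B X x := by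
  rcases hXB.eq_or_ssubset with rfl | hssub
  · refine .of_connected_covers hxX subset_rfl hnbr fun T hT => ?_
    rwa [hT.subset.antisymm hT.ports_subset]
  · obtain ⟨n, w, hw⟩ := h.exists_cyclicEnumeration (hXB hxX)
    exact hw.hasOptimalStrategy hxX hssub

theorem HasOptimalStrategy.of_edge (hnbr : ∀ z ∈ B, ∃ w ∈ B, G.Adj z w) (hxX : x ∈ X)
    (hXB : X ⊆ B) {u w : V} (huw : G.Adj u w) (hB : (B : Set V) = {u, w}) :
    HasOptimalStrategy G B X x := by
  refine .of_connected_covers hxX hXB hnbr fun T hT a ha b hb => ?_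
  obtain rfl | rfl : a = u ∨ a = w := hB.subset (hT.subset ha)
  all_goals obtain rfl | rfl : b = _ ∨ b = _ := hB.subset (hT.subset hb)
  exacts [.refl G ha, .of_adj huw ha hb, .of_adj huw.symm ha hb, .refl G ha]

theorem HasOptimalStrategy.of_isChordal (hnbr : ∀ z ∈ B, ∃ w ∈ B, G.Adj z w) (hxX : x ∈ X)
    (hXB : X ⊆ B) (hchordal : IsChordal (G.induce (B : Set V)))
    (hconn : (G.induce (B : Set V)).Connected)
    (hcut : ∀ y, ¬ IsCutVertex (G.induce (B : Set V)) y) : HasOptimalStrategy G B X x := by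
  refine .of_connected_covers hxX hXB hnbr fun T hT a ha b hb => ?_
  have hcov : IsCover (G.induce (B : Set V)) {v | v.1 ∈ T} :=
    fun u v huv => hT.cover u u.2 v v.2 huv
  exact .of_induce (fun z hz => hz) (hchordal.reachableIn_of_isCover hconn hcut hcov
    (s := ⟨a, hT.subset ha⟩) (t := ⟨b, hT.subset hb⟩) ha hb)

end Block

/-! ### Separation by blocks -/

section Nonseparable

variable {G : SimpleGraph V} {S B : Set V}

/-- `S` is nonempty and induces a connected subgraph of `G` without cut vertices; the maximal such
sets are the blocks of `G`. -/
structure IsNonseparable (G : SimpleGraph V) (S : Set V) : Prop where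
  nonempty : S.Nonempty
  reachableIn : ∀ u ∈ S, ∀ v ∈ S, ReachableIn G S u v
  reachableIn_diff : ∀ y, ∀ u ∈ S, ∀ v ∈ S, u ≠ y → v ≠ y → ReachableIn G (S \ {y}) u v

lemma reachableIn_diff_iff_reachable_delVert {y : S} {u v : {v : S | v ≠ y}} :
    ReachableIn G (S \ {y.1}) u.1 v.1 ↔ (delVert (G.induce S) y).Reachable u v := by
  have := reachableIn_iff_reachable
    ((Embedding.induce (G := G) S).comp (Embedding.induce {v : S | v ≠ y})) (a := u) (b := v)
  rwa [show Set.range _ = S \ {y.1} from ?_] at this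
  ext z
  exact ⟨fun ⟨a, ha⟩ => ha ▸ ⟨a.1.2, fun h => a.2 (Subtype.ext h)⟩,
    fun hz => ⟨⟨⟨z, hz.1⟩, fun h => hz.2 (congrArg Subtype.val h)⟩, rfl⟩⟩

lemma isNonseparable_iff :
    IsNonseparable G S ↔ (G.induce S).Connected ∧ ∀ y : S, ¬ IsCutVertex (G.induce S) y := by
  refine ⟨fun ⟨⟨s, hs⟩, hreach, hdiff⟩ => ⟨?_, ?_⟩, fun ⟨hconn, hcut⟩ => ?_⟩
  · have : Nonempty S := ⟨⟨s, hs⟩⟩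
    exact ⟨fun u v => reachableIn_iff_reachable_induce.1 (hreach u u.2 v v.2)⟩
  · rintro y ⟨u, v, hu, hv, -, h⟩
    exact h (reachableIn_diff_iff_reachable_delVert.1 (hdiff y u u.2 v v.2
      (fun h => hu (Subtype.ext h)) (fun h => hv (Subtype.ext h))))
  · obtain ⟨s⟩ := hconn.nonempty
    have hreach : ∀ u ∈ S, ∀ v ∈ S, ReachableIn G S u v := fun u hu v hv =>
      reachableIn_iff_reachable_induce.2 (hconn.preconnected ⟨u, hu⟩ ⟨v, hv⟩)
    refine ⟨⟨s, s.2⟩, hreach, fun y u hu v hv huy hvy => ?_⟩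
    by_cases hy : y ∈ S
    · by_contra h
      exact hcut ⟨y, hy⟩ ⟨⟨u, hu⟩, ⟨v, hv⟩, fun h => huy (congrArg Subtype.val h),
        fun h => hvy (congrArg Subtype.val h), hconn.preconnected _ _,
        fun hr => h (reachableIn_diff_iff_reachable_delVert.2 hr)⟩
    · rw [Set.sdiff_singleton_eq_self hy]
      exact hreach u hu v hv

lemma isBlock_iff_maximal : IsBlock G B ↔ Maximal (IsNonseparable G) B := by
  simp only [IsBlock, Maximal, isNonseparable_iff, and_assoc]
  exact ⟨fun ⟨h₁, h₂, h⟩ => ⟨h₁, h₂, fun T hT hBT => h T hBT hT.1 hT.2⟩,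
    fun ⟨h₁, h₂, h⟩ => ⟨h₁, h₂, fun T hBT hT hT' => h ⟨hT, hT'⟩ hBT⟩⟩

lemma isNonseparable_pair {x z : V} (h : G.Adj x z) : IsNonseparable G {x, z} := by
  have hreach : ∀ T : Set V, ∀ u ∈ ({x, z} : Set V), ∀ v ∈ ({x, z} : Set V), u ∈ T → v ∈ T →
      ReachableIn G T u v := by
    rintro T u (rfl | rfl) v (rfl | rfl) hu hv
    exacts [.refl G hu, .of_adj h hu hv, .of_adj h.symm hu hv, .refl G hu]
  exact ⟨⟨x, .inl rfl⟩, fun u hu v hv => hreach _ u hu v hv hu hv,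
    fun y u hu v hv huy hvy => hreach _ u hu v hv ⟨hu, huy⟩ ⟨hv, hvy⟩⟩

lemma exists_isBlock_of_adj [Finite V] {x z : V} (h : G.Adj x z) :
    ∃ B, x ∈ B ∧ z ∈ B ∧ IsBlock G B := by
  obtain ⟨B, hB, hmax⟩ := (Set.toFinite {T | IsNonseparable G T}).exists_le_maximal
    (isNonseparable_pair h)
  exact ⟨B, hB (.inl rfl), hB (.inr rfl), isBlock_iff_maximal.2 hmax⟩

lemma exists_reachableIn_diff_of_mem_support {b b' : V} {p : G.Walk b b'} (hp : p.IsPath) {v y : V}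
    (hv : v ∈ p.support) (hvy : v ≠ y) :
    ∃ e, (e = b ∨ e = b') ∧ e ≠ y ∧ ReachableIn G ({z | z ∈ p.support} \ {y}) v e := by
  obtain ⟨q, r, rfl⟩ := Walk.mem_support_iff_exists_append.1 hv
  by_cases hy : y ∈ q.support
  · have hyr : y ∉ r.support := fun h => hp.ne_of_mem_support_of_append hvy.symm hy h rfl
    refine ⟨b', .inr rfl, fun h => hyr (h ▸ r.end_mem_support), r, fun z hz => ⟨?_, ?_⟩⟩
    · exact (Walk.mem_support_append_iff q r).2 (.inr hz)
    · rintro rfl; exact hyr hz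
  · refine ⟨b, .inl rfl, fun h => hy (h ▸ q.start_mem_support), .symm ⟨q, fun z hz => ⟨?_, ?_⟩⟩⟩
    · exact (Walk.mem_support_append_iff q r).2 (.inl hz)
    · rintro rfl; exact hy hz

lemma IsNonseparable.union_support (hB : IsNonseparable G B) {b b' : V} (hb : b ∈ B) (hb' : b' ∈ B)
    {p : G.Walk b b'} (hp : p.IsPath) : IsNonseparable G (B ∪ {v | v ∈ p.support}) := by
  set T := B ∪ {v | v ∈ p.support}
  have hBT : B ⊆ T := Set.subset_union_left
  have hattach : ∀ v ∈ T, ∀ y, v ≠ y → ∃ e ∈ B, e ≠ y ∧ ReachableIn G (T \ {y}) v e := by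
    rintro v (hv | hv) y hvy
    · exact ⟨v, hv, hvy, .refl G ⟨hBT hv, hvy⟩⟩
    · obtain ⟨e, he, hey, h⟩ := exists_reachableIn_diff_of_mem_support hp hv hvy
      refine ⟨e, ?_, hey, h.mono (Set.sdiff_subset_sdiff_left Set.subset_union_right)⟩
      rcases he with rfl | rfl <;> assumption
  have hdiff : ∀ y, ∀ u ∈ T, ∀ v ∈ T, u ≠ y → v ≠ y → ReachableIn G (T \ {y}) u v := by
    intro y u hu v hv huy hvy
    obtain ⟨e, he, hey, hue⟩ := hattach u hu y huy
    obtain ⟨e', he', hey', hve⟩ := hattach v hv y hvy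
    exact hue.trans (((hB.reachableIn_diff y e he e' he' hey hey').mono
      (Set.sdiff_subset_sdiff_left hBT)).trans hve.symm)
  refine ⟨hB.nonempty.mono hBT, fun u hu v hv => ?_, hdiff⟩
  rcases eq_or_ne u v with rfl | huv
  · exact .refl G hu
  · obtain ⟨e, he, -, hue⟩ := hattach u hu v huv
    obtain ⟨e', he', -, hve⟩ := hattach v hv u huv.symm
    exact (hue.mono Set.sdiff_subset).trans
      (((hB.reachableIn e he e' he').mono hBT).trans (hve.mono Set.sdiff_subset).symm)

end Nonseparable

section Branches

variable {G : SimpleGraph V} {B : Set V}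

/-- The graph `G` without the edges inside `B`. For a block `B`, its components are the branches
hanging off the vertices of `B`. -/
def cutOut (G : SimpleGraph V) (B : Set V) : SimpleGraph V := G.deleteEdges B.sym2

lemma cutOut_adj {u v : V} : (cutOut G B).Adj u v ↔ G.Adj u v ∧ ¬ (u ∈ B ∧ v ∈ B) := by
  rw [cutOut, deleteEdges_adj, Set.mk_mem_sym2_iff]

theorem IsBlock.eq_of_reachable_cutOut (hB : IsBlock G B) {b b' : V} (hb : b ∈ B) (hb' : b' ∈ B)
    (h : (cutOut G B).Reachable b b') : b = b' := by
  obtain ⟨hsep, hmax⟩ := isBlock_iff_maximal.1 hB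
  obtain ⟨p, hp⟩ := h.exists_isPath
  have hle : cutOut G B ≤ G := deleteEdges_le _
  have hpB : ∀ v ∈ p.support, v ∈ B := by
    have := hmax (hsep.union_support hb hb' ((Walk.isPath_mapLe hle).2 hp)) Set.subset_union_left
    intro v hv
    exact this (.inr (by simpa using hv))
  by_contra hne
  have hadj := cutOut_adj.1 (p.adj_snd (Walk.not_nil_of_ne hne))
  exact hadj.2 ⟨hb, hpB _ (p.getVert_mem_support 1)⟩

lemma exists_reachable_cutOut (hG : G.Connected) {x : V} (hx : x ∈ B) (v : V) :
    ∃ b ∈ B, (cutOut G B).Reachable b v := by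
  obtain ⟨p⟩ := hG.preconnected x v
  have huniv : ReachableIn G Set.univ x v := ⟨p, fun z _ => Set.mem_univ z⟩
  refine huniv.induction (P := fun v => ∃ b ∈ B, (cutOut G B).Reachable b v) ⟨x, hx, .refl x⟩ ?_
  rintro c d - - hcd ⟨b, hb, hbc⟩
  by_cases hd : d ∈ B
  · exact ⟨d, hd, .refl d⟩
  · have : (cutOut G B).Adj c d := cutOut_adj.2 ⟨hcd, fun h => hd h.2⟩
    exact ⟨b, hb, hbc.trans this.reachable⟩

end Branches

/-! ### Branches and their top blocks -/

section TopBlock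

variable {G : SimpleGraph V} {x₀ x z b c u w : V} {S B : Finset V}

/-- `S` consists of `x` and of parts of `G` that are attached at `x` only and avoid the vertex
`x₀`, unless `x = x₀`. -/
structure IsBranch (G : SimpleGraph V) (x₀ : V) (S : Finset V) (x : V) : Prop where
  root_mem : x ∈ S
  mem_of_adj : ∀ u ∈ S, u ≠ x → ∀ w, G.Adj u w → w ∈ S
  eq_of_mem : x₀ ∈ S → x₀ = x

lemma IsBranch.exists_adj_root (hG : G.Connected) (h : IsBranch G x₀ S x) (hS : S ≠ {x}) :
    ∃ z ∈ S, z ≠ x ∧ G.Adj z x := by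
  obtain ⟨v, hv, hvx⟩ : ∃ v ∈ S, v ≠ x := by
    by_contra! hall
    exact hS (Finset.eq_singleton_iff_unique_mem.2 ⟨h.root_mem, hall⟩)
  by_contra! hnone
  obtain ⟨p⟩ := hG.preconnected v x₀
  have huniv : ReachableIn G Set.univ v x₀ := ⟨p, fun z _ => Set.mem_univ z⟩
  have hstay : x₀ ∈ S ∧ x₀ ≠ x := by
    refine huniv.induction (P := fun t => t ∈ S ∧ t ≠ x) ⟨hv, hvx⟩ ?_
    rintro c d - - hcd ⟨hc, hcx⟩
    refine ⟨h.mem_of_adj c hc hcx d hcd, ?_⟩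
    rintro rfl
    exact hnone c hc hcx hcd
  exact hstay.2 (h.eq_of_mem hstay.1)

lemma IsNonseparable.exists_adj {S : Set V} (h : IsNonseparable G S) (hu : u ∈ S) (hw : w ∈ S)
    (huw : u ≠ w) : ∃ v ∈ S, G.Adj u v := by
  obtain ⟨p, hp⟩ := h.reachableIn u hu w hw
  exact ⟨p.snd, hp _ (p.getVert_mem_support 1), p.adj_snd (Walk.not_nil_of_ne huw)⟩

/-- `B` is a block through the root of the branch `S` at `x`, contained in `S`. -/
structure IsTopBlock (G : SimpleGraph V) (x₀ : V) (S : Finset V) (x : V) (B : Finset V) :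
    Prop where
  connected : G.Connected
  isBranch : IsBranch G x₀ S x
  isBlock : IsBlock G (B : Set V)
  root_mem : x ∈ B
  subset : B ⊆ S

lemma IsBranch.exists_isTopBlock [Finite V] (hG : G.Connected) (h : IsBranch G x₀ S x)
    (hS : S ≠ {x}) : ∃ B z, IsTopBlock G x₀ S x B ∧ z ∈ B ∧ z ≠ x := by
  obtain ⟨z, hz, hzx, hadj⟩ := h.exists_adj_root hG hS
  obtain ⟨B, hzB, hxB, hB⟩ := exists_isBlock_of_adj hadj
  lift B to Finset V using B.toFinite
  refine ⟨B, z, ⟨hG, h, hB, hxB, fun b hb => ?_⟩, hzB, hzx⟩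
  rcases eq_or_ne b x with rfl | hbx
  · exact h.root_mem
  have hreach := (isBlock_iff_maximal.1 hB).1.reachableIn_diff x z hzB b hb hzx hbx
  refine (hreach.induction (P := fun t => t ∈ S ∧ t ≠ x) ⟨hz, hzx⟩ ?_).1
  rintro c d - hd hcd ⟨hc, hcx⟩
  exact ⟨h.mem_of_adj c hc hcx d hcd, hd.2⟩

open Classical in
/-- The part of `S` that hangs off the vertex `b` of the block `B`, including `b`. -/
noncomputable def fibre (G : SimpleGraph V) (S B : Finset V) (b : V) : Finset V :=
  S.filter fun v => (cutOut G (B : Set V)).Reachable b v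

lemma mem_fibre {v : V} : v ∈ fibre G S B b ↔ v ∈ S ∧ (cutOut G (B : Set V)).Reachable b v := by
  simp [fibre]

lemma mem_fibre_of_adj (hu : u ∈ fibre G S B b) (huw : G.Adj u w) (hw : w ∈ S)
    (hB : ¬ (u ∈ B ∧ w ∈ B)) : w ∈ fibre G S B b := by
  rw [mem_fibre] at hu ⊢
  have : (cutOut G (B : Set V)).Adj u w := cutOut_adj.2 ⟨huw, hB⟩
  exact ⟨hw, hu.2.trans this.reachable⟩

open Classical in
/-- The vertices of the block `B` off which something hangs, together with the root `x`. -/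
noncomputable def ports (G : SimpleGraph V) (S : Finset V) (x : V) (B : Finset V) : Finset V :=
  B.filter fun b => b = x ∨ fibre G S B b ≠ {b}

lemma mem_ports : b ∈ ports G S x B ↔ b ∈ B ∧ (b = x ∨ fibre G S B b ≠ {b}) := by
  simp [ports]

lemma ports_subset : ports G S x B ⊆ B := fun _ hb => (mem_ports.1 hb).1

namespace IsTopBlock

lemma root_mem_ports (h : IsTopBlock G x₀ S x B) : x ∈ ports G S x B :=
  mem_ports.2 ⟨h.root_mem, .inl rfl⟩

lemma self_mem_fibre (h : IsTopBlock G x₀ S x B) (hb : b ∈ B) : b ∈ fibre G S B b :=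
  mem_fibre.2 ⟨h.subset hb, .refl b⟩

lemma eq_of_mem_fibre (h : IsTopBlock G x₀ S x B) (hb : b ∈ B) (hc : c ∈ B)
    (hcb : c ∈ fibre G S B b) : c = b :=
  (h.isBlock.eq_of_reachable_cutOut hb hc (mem_fibre.1 hcb).2).symm

lemma disjoint_fibre (h : IsTopBlock G x₀ S x B) (hb : b ∈ B) (hc : c ∈ B) (hbc : b ≠ c) :
    Disjoint (fibre G S B b) (fibre G S B c) :=
  Finset.disjoint_left.2 fun _ hvb hvc => hbc (h.isBlock.eq_of_reachable_cutOut hb hc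
    ((mem_fibre.1 hvb).2.trans (mem_fibre.1 hvc).2.symm))

lemma root_notMem_fibre (h : IsTopBlock G x₀ S x B) (hb : b ∈ B) (hbx : b ≠ x) :
    x ∉ fibre G S B b :=
  fun hx => hbx (h.eq_of_mem_fibre hb h.root_mem hx).symm

lemma isBranch_fibre (h : IsTopBlock G x₀ S x B) (hb : b ∈ B) :
    IsBranch G x₀ (fibre G S B b) b := by
  refine ⟨h.self_mem_fibre hb, fun u hu hub w huw => ?_, fun hx₀ => ?_⟩
  · have huB : u ∉ B := fun huB => hub (h.eq_of_mem_fibre hb huB hu)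
    exact mem_fibre_of_adj hu huw (h.isBranch.mem_of_adj u (mem_fibre.1 hu).1
      (fun hux => huB (hux ▸ h.root_mem)) w huw) fun hB => huB hB.1
  · obtain rfl := h.isBranch.eq_of_mem (mem_fibre.1 hx₀).1
    exact h.eq_of_mem_fibre hb h.root_mem hx₀

lemma base_notMem_fibre (h : IsTopBlock G x₀ S x B) (hb : b ∈ B) (hbx : b ≠ x) :
    x₀ ∉ fibre G S B b := fun hx₀ => by
  obtain rfl := h.isBranch.eq_of_mem (mem_fibre.1 hx₀).1
  exact h.root_notMem_fibre hb hbx hx₀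

lemma card_fibre_lt (h : IsTopBlock G x₀ S x B) (hb : b ∈ B) (hz : z ∈ B) (hzx : z ≠ x) :
    (fibre G S B b).card < S.card := by
  refine Finset.card_lt_card ⟨fun v hv => (mem_fibre.1 hv).1, fun hsub => hzx ?_⟩
  exact (h.eq_of_mem_fibre hb hz (hsub (h.subset hz))).trans
    (h.eq_of_mem_fibre hb h.root_mem (hsub (h.subset h.root_mem))).symm

lemma mem_block_or_mem_fibre (h : IsTopBlock G x₀ S x B) (hu : u ∈ S) (hw : w ∈ S)
    (huw : G.Adj u w) :
    (u ∈ B ∧ w ∈ B) ∨ ∃ y ∈ ports G S x B, u ∈ fibre G S B y ∧ w ∈ fibre G S B y := by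
  refine or_iff_not_imp_left.2 fun hB => ?_
  obtain ⟨b, hb, hbu⟩ := exists_reachable_cutOut h.connected (B := (B : Set V)) h.root_mem u
  have hub : u ∈ fibre G S B b := mem_fibre.2 ⟨hu, hbu⟩
  have hwb : w ∈ fibre G S B b := mem_fibre_of_adj hub huw hw hB
  refine ⟨b, mem_ports.2 ⟨hb, .inr fun hsing => huw.ne ?_⟩, hub, hwb⟩
  rw [hsing, Finset.mem_singleton] at hub hwb
  rw [hub, hwb]

end IsTopBlock

end TopBlock

/-! ### Guard counts of a defense and the main induction -/

lemma PortStrategy.two_le [DecidableEq V] {G : SimpleGraph V} {S X : Finset V} {N : ℕ}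
    {T : Set (Multiset V × Finset V)} (h : PortStrategy G S X N T) {x : V} (hx : x ∈ X) :
    2 ≤ N := by
  obtain ⟨p, hp⟩ := h.nonempty
  obtain ⟨q, hq, hxq, -⟩ := h.lend p hp x hx
  have hguard := Multiset.card_pos_iff_exists_mem.2 ⟨x, h.port_mem q hq x hx⟩
  have hlent := Finset.card_pos.2 ⟨x, hxq⟩
  have := h.card_add_card q hq
  omega

lemma IsBlock.hasOptimalStrategy [DecidableEq V] {G : SimpleGraph V} {B X : Finset V}
    (hB : IsBlock G (B : Set V))
    (htype : IsCycleSet G (B : Set V) ∨ (∃ u w : V, G.Adj u w ∧ (B : Set V) = {u, w}) ∨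
      (IsChordal (G.induce (B : Set V)) ∧ IsBiconnected (G.induce (B : Set V))))
    (hBnt : B.Nontrivial) {x : V} (hx : x ∈ X) (hX : X ⊆ B) : HasOptimalStrategy G B X x := by
  obtain ⟨z, hz, hzx⟩ := hBnt.exists_ne x
  have hns := (isBlock_iff_maximal.1 hB).1
  have hnbr : ∀ v ∈ B, ∃ w ∈ B, G.Adj v w := by
    intro v hv
    rcases eq_or_ne v x with rfl | hvx
    · exact hns.exists_adj hv hz hzx.symm
    · exact hns.exists_adj hv (hX hx) hvx
  rcases htype with hcycle | ⟨u, w, huw, hedge⟩ | ⟨hchordal, hconn, -, hcut⟩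
  · exact .of_isCycleSet hns.reachableIn hnbr hx hX hcycle
  · exact .of_edge hnbr hx hX huw hedge
  · exact .of_isChordal hnbr hx hX hchordal hconn hcut

section DefenseCounts

variable {G : SimpleGraph V} {x₀ x : V} {S B : Finset V} {F : Set (V → ℕ)}

/-- What is used of the numbers of guards that the configurations of a defense of an extension of
`G` at `x₀` have on the vertices of `G`: an attack on an edge leaving a set `Y` whose outer
boundary is unoccupied forces a guard out of `Y`. -/
structure DefenseCounts (G : SimpleGraph V) (x₀ : V) (F : Set (V → ℕ)) : Prop where
  nonempty : F.Nonempty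
  cover : ∀ f ∈ F, ∀ u v, G.Adj u v → 1 ≤ f u ∨ 1 ≤ f v
  exists_sum_lt : ∀ f ∈ F, ∀ Y : Finset V, x₀ ∉ Y → ∀ z ∈ Y, ∀ w ∉ Y, G.Adj z w →
    (∀ y ∈ Y, ∀ u, G.Adj y u → u ∈ Y ∨ f u = 0) → ∃ f' ∈ F, ∑ y ∈ Y, f' y < ∑ y ∈ Y, f y

/-- Every count in `F` has at least `a` guards on `S` besides those at `x`. -/
def IsLowerBound [DecidableEq V] (F : Set (V → ℕ)) (S : Finset V) (x : V) (a : ℕ) : Prop :=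
  ∀ f ∈ F, a ≤ ∑ v ∈ S.erase x, f v

variable [DecidableEq V]

lemma DefenseCounts.lt_sum (hF : DefenseCounts G x₀ F) (hG : G.Connected)
    (hS : IsBranch G x₀ S x) (hne : S ≠ {x}) {a : ℕ} (ha : IsLowerBound F S x a) :
    ∀ f ∈ F, a < ∑ v ∈ S, f v := by
  intro f hf
  have hsum := Finset.add_sum_erase S f hS.root_mem
  by_cases hfx : f x = 0
  · obtain ⟨z, hz, hzx, hadj⟩ := hS.exists_adj_root hG hne
    have hx₀ : x₀ ∉ S.erase x := fun h =>
      Finset.ne_of_mem_erase h (hS.eq_of_mem (Finset.mem_of_mem_erase h))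
    have hout : ∀ y ∈ S.erase x, ∀ u, G.Adj y u → u ∈ S.erase x ∨ f u = 0 := by
      intro y hy u hyu
      rw [Finset.mem_erase] at hy
      rcases eq_or_ne u x with rfl | hux
      · exact .inr hfx
      · exact .inl (Finset.mem_erase.2 ⟨hux, hS.mem_of_adj y hy.2 hy.1 u hyu⟩)
    obtain ⟨f', hf', hlt⟩ := hF.exists_sum_lt f hf (S.erase x) hx₀ z
      (Finset.mem_erase.2 ⟨hzx, hz⟩) x (Finset.notMem_erase x S) hadj hout
    have := ha f' hf'
    omega
  · have := ha f hf
    omega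

variable {a : V → ℕ}

lemma le_sum_fibre (ha : ∀ b ∈ B, IsLowerBound F (fibre G S B b) b (a b)) {b : V} (hb : b ∈ B) :
    ∀ f ∈ F, a b ≤ ∑ v ∈ fibre G S B b, f v := fun f hf =>
  (ha b hb f hf).trans (Finset.sum_le_sum_of_subset (Finset.erase_subset _ _))

lemma sum_fibre_sub_of_notMem_ports (hF : F.Nonempty)
    (ha : ∀ b ∈ B, IsLowerBound F (fibre G S B b) b (a b)) {b : V} (hb : b ∈ B)
    (hbX : b ∉ ports G S x B) (f : V → ℕ) : ∑ v ∈ fibre G S B b, f v - a b = f b := by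
  have hsing : fibre G S B b = {b} := by
    by_contra hne
    exact hbX (mem_ports.2 ⟨hb, .inr hne⟩)
  obtain ⟨g, hg⟩ := hF
  have hab := ha b hb g hg
  rw [hsing, Finset.erase_singleton, Finset.sum_empty] at hab
  rw [hsing, Finset.sum_singleton]
  omega

namespace IsTopBlock

lemma lt_sum_fibre (h : IsTopBlock G x₀ S x B) (hF : DefenseCounts G x₀ F)
    (ha : ∀ b ∈ B, IsLowerBound F (fibre G S B b) b (a b)) {b : V} (hb : b ∈ ports G S x B)
    (hbx : b ≠ x) : ∀ f ∈ F, a b < ∑ v ∈ fibre G S B b, f v := by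
  obtain ⟨hbB, hne⟩ := mem_ports.1 hb
  exact hF.lt_sum h.connected (h.isBranch_fibre hbB) (hne.resolve_left hbx) (ha b hbB)

lemma exists_sum_fibre_lt (h : IsTopBlock G x₀ S x B) (hF : DefenseCounts G x₀ F)
    (ha : ∀ b ∈ B, IsLowerBound F (fibre G S B b) b (a b)) {f : V → ℕ} (hf : f ∈ F)
    {Y : Finset V} (hY : Y ⊆ (ports G S x B).erase x) {z w : V} (hz : z ∈ Y) (hw : w ∈ B)
    (hwY : w ∉ Y) (hzw : G.Adj z w) (hout : ∀ y ∈ Y, ∀ u ∈ B, G.Adj y u →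
      u ∈ Y ∨ u ∉ ports G S x B ∧ ∑ v ∈ fibre G S B u, f v - a u = 0) :
    ∃ f' ∈ F, ∑ y ∈ Y, ∑ v ∈ fibre G S B y, f' v < ∑ y ∈ Y, ∑ v ∈ fibre G S B y, f v := by
  have hYB : ∀ y ∈ Y, y ∈ B := fun y hy => ports_subset (Finset.mem_of_mem_erase (hY hy))
  have hYx : ∀ y ∈ Y, y ≠ x := fun y hy => Finset.ne_of_mem_erase (hY hy)
  have hdisj : (Y : Set V).PairwiseDisjoint (fibre G S B) :=
    fun b hb c hc hbc => h.disjoint_fibre (hYB b hb) (hYB c hc) hbc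
  simp only [← Finset.sum_biUnion hdisj]
  refine hF.exists_sum_lt f hf (Y.biUnion (fibre G S B)) ?_ z ?_ w ?_ hzw fun v hv u hvu => ?_
  · rw [Finset.mem_biUnion]
    rintro ⟨y, hy, hx₀⟩
    exact h.base_notMem_fibre (hYB y hy) (hYx y hy) hx₀
  · exact Finset.mem_biUnion.2 ⟨z, hz, h.self_mem_fibre (hYB z hz)⟩
  · rw [Finset.mem_biUnion]
    rintro ⟨y, hy, hwy⟩
    exact hwY (h.eq_of_mem_fibre (hYB y hy) hw hwy ▸ hy)
  obtain ⟨y, hy, hvy⟩ := Finset.mem_biUnion.1 hv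
  have hyB := hYB y hy
  rcases eq_or_ne v y with rfl | hne
  · by_cases huB : u ∈ B
    · refine (hout v hy u huB hvu).imp (fun hu => ?_) fun ⟨huX, hu⟩ => ?_
      · exact Finset.mem_biUnion.2 ⟨u, hu, h.self_mem_fibre huB⟩
      · rwa [sum_fibre_sub_of_notMem_ports hF.nonempty ha huB huX] at hu
    · refine .inl (Finset.mem_biUnion.2 ⟨v, hy, mem_fibre_of_adj hvy hvu ?_ fun hB => huB hB.2⟩)
      exact h.isBranch.mem_of_adj v (h.subset hyB) (hYx v hy) u hvu
  · exact .inl (Finset.mem_biUnion.2 ⟨y, hy, (h.isBranch_fibre hyB).mem_of_adj v hvy hne u hvu⟩)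

lemma demand (h : IsTopBlock G x₀ S x B) (hF : DefenseCounts G x₀ F)
    (ha : ∀ b ∈ B, IsLowerBound F (fibre G S B b) b (a b)) {f : V → ℕ} (hf : f ∈ F) :
    Demand G B (ports G S x B) x fun b => ∑ v ∈ fibre G S B b, f v - a b where
  one_le_of_port y hy hyx := Nat.sub_pos_of_lt (h.lt_sum_fibre hF ha hy hyx f hf)
  cover u hu v hv huv hux hvx := by
    by_cases huX : u ∈ ports G S x B
    · exact .inl (Nat.sub_pos_of_lt (h.lt_sum_fibre hF ha huX hux f hf))
    by_cases hvX : v ∈ ports G S x B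
    · exact .inr (Nat.sub_pos_of_lt (h.lt_sum_fibre hF ha hvX hvx f hf))
    rw [sum_fibre_sub_of_notMem_ports hF.nonempty ha hu huX,
      sum_fibre_sub_of_notMem_ports hF.nonempty ha hv hvX]
    exact hF.cover f hf u v huv
  two_le Y hY z hz w hw hwY hzw hout := by
    by_contra! hlt
    obtain ⟨f', hf', hsum⟩ := h.exists_sum_fibre_lt hF ha hf hY hz hw hwY hzw hout
    refine hsum.not_ge (Finset.sum_le_sum fun y hy => ?_)
    obtain ⟨hyx, hyX⟩ := Finset.mem_erase.1 (hY hy)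
    have := hlt y hy
    have := h.lt_sum_fibre hF ha hyX hyx f' hf'
    omega

lemma add_sum_fibre_le (h : IsTopBlock G x₀ S x B)
    (ha : ∀ b ∈ B, IsLowerBound F (fibre G S B b) b (a b)) {f : V → ℕ} (hf : f ∈ F) :
    a x + ∑ b ∈ B.erase x, ∑ v ∈ fibre G S B b, f v ≤ ∑ v ∈ S.erase x, f v := by
  have herase : ∀ b ∈ B.erase x, (fibre G S B b).erase x = fibre G S B b := fun b hb =>
    Finset.erase_eq_of_notMem
      (h.root_notMem_fibre (Finset.mem_of_mem_erase hb) (Finset.ne_of_mem_erase hb))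
  have hdisj : (B : Set V).PairwiseDisjoint fun b => (fibre G S B b).erase x :=
    fun b hb c hc hbc => (h.disjoint_fibre hb hc hbc).mono (Finset.erase_subset _ _)
      (Finset.erase_subset _ _)
  calc a x + ∑ b ∈ B.erase x, ∑ v ∈ fibre G S B b, f v
      ≤ ∑ v ∈ (fibre G S B x).erase x, f v
          + ∑ b ∈ B.erase x, ∑ v ∈ (fibre G S B b).erase x, f v := by
        refine add_le_add (ha x h.root_mem f hf) (Finset.sum_le_sum fun b hb => ?_)
        rw [herase b hb]
    _ = ∑ v ∈ B.biUnion fun b => (fibre G S B b).erase x, f v := by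
        rw [Finset.add_sum_erase B (fun b => ∑ v ∈ (fibre G S B b).erase x, f v) h.root_mem,
          Finset.sum_biUnion hdisj]
    _ ≤ ∑ v ∈ S.erase x, f v := by
        refine Finset.sum_le_sum_of_subset (Finset.biUnion_subset.2 fun b _ v hv => ?_)
        rw [Finset.mem_erase, mem_fibre] at hv
        exact Finset.mem_erase.2 ⟨hv.1, hv.2.1⟩

lemma exists_rootedStrategy (h : IsTopBlock G x₀ S x B)
    (hopt : HasOptimalStrategy G B (ports G S x B) x) (hF : DefenseCounts G x₀ F)
    (ih : ∀ b ∈ B, ∃ a T,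
      RootedStrategy G (fibre G S B b) b a T ∧ IsLowerBound F (fibre G S B b) b a) :
    ∃ a T, RootedStrategy G S x a T ∧ IsLowerBound F S x a := by
  obtain ⟨N, TB, hTB, hN⟩ := hopt
  choose! a T hT ha using ih
  have htwo := hTB.two_le h.root_mem_ports
  refine ⟨N + ∑ b ∈ ports G S x B, a b - 2, _,
    hTB.glue (fun y hy => hT y (ports_subset hy)) h.root_mem_ports
      (fun u hu v hv => h.mem_block_or_mem_fibre hu hv) (by omega), fun f hf => ?_⟩
  have hdemand := hN _ (h.demand hF ha hf)
  have hports : ∑ b ∈ ports G S x B, a b ≤ ∑ b ∈ B, a b :=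
    Finset.sum_le_sum_of_subset ports_subset
  have hfibres : ∀ b ∈ B.erase x, a b ≤ ∑ v ∈ fibre G S B b, f v := fun b hb =>
    le_sum_fibre ha (Finset.mem_of_mem_erase hb) f hf
  rw [Finset.sum_tsub_distrib _ hfibres] at hdemand
  have hle := Finset.sum_le_sum hfibres
  have hroot := Finset.add_sum_erase B a h.root_mem
  have htotal := h.add_sum_fibre_le ha hf
  omega

end IsTopBlock

theorem DefenseCounts.exists_rootedStrategy [Finite V] (hF : DefenseCounts G x₀ F)
    (hG : G.Connected)
    (hopt : ∀ B X : Finset V, IsBlock G B → B.Nontrivial → ∀ x ∈ X, X ⊆ B →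
      HasOptimalStrategy G B X x)
    (hS : IsBranch G x₀ S x) : ∃ a T, RootedStrategy G S x a T ∧ IsLowerBound F S x a := by
  induction hn : S.card using Nat.strong_induction_on generalizing S x with
  | _ n ih =>
    by_cases hne : S = {x}
    · exact hne ▸ ⟨0, _, .singleton G x, fun f _ => Nat.zero_le _⟩
    obtain ⟨B, z, h, hz, hzx⟩ := hS.exists_isTopBlock hG hne
    have hB := hopt B _ h.isBlock ⟨z, hz, x, h.root_mem, hzx⟩ x h.root_mem_ports ports_subset
    exact h.exists_rootedStrategy hB hF fun b hb =>
      ih _ (hn ▸ h.card_fibre_lt hb hz hzx) (h.isBranch_fibre hb) rfl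

end DefenseCounts

/-! ### Upper bounds from a rooted strategy -/

section UpperBound

variable {G : SimpleGraph V} {x u v : V}

lemma addPendant_adj_some : (addPendant G x).Adj (some u) (some v) ↔ G.Adj u v := by
  rw [addPendant, fromRel_adj]
  simpa [G.adj_comm v u] using Adj.ne

lemma addPendant_adj_none : (addPendant G x).Adj none (some v) ↔ v = x := by
  simp [addPendant]

/-- The inclusion of `G` into `G_x^+`. -/
def toAddPendant (G : SimpleGraph V) (x : V) : G →g addPendant G x :=
  ⟨some, addPendant_adj_some.2⟩

lemma Moves.of_forall_adj {W : Type} {f g : W → V} {C : Multiset W}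
    (h : ∀ w ∈ C, G.Adj (f w) (g w)) : Moves G (C.map f) (C.map g) := by
  refine ⟨C.map fun w => (f w, g w), by simp, by simp, fun p hp => ?_⟩
  obtain ⟨w, hw, rfl⟩ := Multiset.mem_map.1 hp
  exact .inr (h w hw)

/-- The configuration of `G_x^+` belonging to a state of a strategy on `G` whose only port is `x`:
a guard on loan stands on the pendant vertex. -/
def pendantConfig (p : Multiset V × Finset V) : Multiset (Option V) :=
  p.1.map some + p.2.val.map fun _ => none

lemma some_mem_pendantConfig {p : Multiset V × Finset V} : some v ∈ pendantConfig p ↔ v ∈ p.1 := by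
  simp [pendantConfig, Multiset.mem_replicate]

variable [DecidableEq V] {a : ℕ} {p q : Multiset V × Finset V} {T : Set (Multiset V × Finset V)}
  {S : Finset V}

lemma Transfers.exists_pendantConfig_eq {r : Multiset V → Multiset V → Prop}
    (h : Transfers r p q) (hp : p.2 ⊆ {x}) (hq : q.2 ⊆ {x}) :
    ∃ C C' D D', r C C' ∧ Moves (addPendant G x) D D' ∧
      pendantConfig p = C.map some + D ∧ pendantConfig q = C'.map some + D' := by
  obtain ⟨C, C', hr, hpC, hqC⟩ := h
  have hadj : ∀ {s t : Finset V}, s ⊆ {x} → ∀ y ∈ (s \ t).val,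
      (addPendant G x).Adj none (some y) := fun hs y hy =>
    addPendant_adj_none.2 (Finset.mem_singleton.1 (hs (Finset.mem_sdiff.1 hy).1))
  have hlend := Moves.of_forall_adj fun y hy => (hadj (t := p.2) hq y hy).symm
  have hreclaim := Moves.of_forall_adj (hadj (t := q.2) hp)
  have hsplit : ∀ s t : Finset V, s.val = (s \ t).val + (s ∩ t).val := fun s t => by
    rw [Finset.sdiff_val, Finset.inter_val, Multiset.sub_add_inter]
  refine ⟨C, C', _, _, hr, (hlend.add hreclaim).add
    (.refl _ ((p.2 ∩ q.2).val.map fun _ => none)), ?_, ?_⟩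
  · rw [pendantConfig, hpC, hsplit p.2 q.2]
    simp only [Multiset.map_add]
    ac_rfl
  · rw [pendantConfig, hqC, hsplit q.2 p.2, Finset.inter_comm]
    simp only [Multiset.map_add]
    ac_rfl

namespace RootedStrategy

lemma exists_defends_pendant (h : RootedStrategy G S x a T) (hp : p ∈ T) :
    ∃ q ∈ T, Defends (addPendant G x) (some x) none (pendantConfig p) (pendantConfig q) := by
  have hadj : (addPendant G x).Adj (some x) none := (addPendant_adj_none.2 rfl).symm
  have hx := Finset.mem_singleton_self x
  rcases Finset.subset_singleton_iff.1 (h.lent_subset p hp) with hlent | hlent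
  · obtain ⟨q, hq, hxq, hpq⟩ := h.lend p hp x hx
    have hq2 := (h.lent_subset q hq).antisymm (Finset.singleton_subset_iff.2 hxq)
    obtain ⟨R, hR⟩ := Multiset.exists_cons_of_mem (h.port_mem p hp x hx)
    have hmove : Moves (addPendant G x) (R.map some) (q.1.map some) :=
      (hpq.of_lend hlent hq2 hR).map (toAddPendant G x)
    refine ⟨q, hq, ?_⟩
    convert (Defends.of_adj hadj).add_right hmove using 1
    · simp [pendantConfig, hlent, hR]
    · rw [pendantConfig, hq2, add_comm, Finset.singleton_val, Multiset.map_singleton]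
  · refine ⟨p, hp, .swap hadj ?_ ?_⟩
    · exact some_mem_pendantConfig.2 (h.port_mem p hp x hx)
    · simp [pendantConfig, hlent]

theorem evc_addPendant_le [Fintype V] (h : RootedStrategy G Finset.univ x a T) :
    evc (addPendant G x) ≤ a + 2 := by
  refine Nat.sInf_le ⟨pendantConfig '' T, h.nonempty.image _, ?_, ?_⟩
  · rintro _ ⟨p, hp, rfl⟩
    refine ⟨by simpa [pendantConfig] using h.card_add_card p hp, ?_⟩
    have hx : some x ∈ pendantConfig p :=
      some_mem_pendantConfig.2 (h.port_mem p hp x (Finset.mem_singleton_self x))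
    rintro (_ | u) (_ | v) huv
    · exact (huv.ne rfl).elim
    · exact .inr (addPendant_adj_none.1 huv ▸ hx)
    · exact .inl (addPendant_adj_none.1 huv.symm ▸ hx)
    · exact (h.cover p hp u (Finset.mem_univ u) v (Finset.mem_univ v)
        (addPendant_adj_some.1 huv)).imp some_mem_pendantConfig.2 some_mem_pendantConfig.2
  · rintro _ ⟨p, hp, rfl⟩ u v huv
    suffices hdef : ∃ q ∈ T, Defends (addPendant G x) u v (pendantConfig p) (pendantConfig q) from
      Set.exists_mem_image.2 hdef
    obtain ⟨q, hq, hpend⟩ := h.exists_defends_pendant hp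
    rcases u with _ | u <;> rcases v with _ | v
    · exact (huv.ne rfl).elim
    · exact ⟨q, hq, addPendant_adj_none.1 huv ▸ hpend.symm⟩
    · exact ⟨q, hq, addPendant_adj_none.1 huv.symm ▸ hpend⟩
    · obtain ⟨q, hq, hpq⟩ := h.defend p hp u (Finset.mem_univ u) v (Finset.mem_univ v)
        (addPendant_adj_some.1 huv)
      obtain ⟨C, C', D, D', hC, hD, hpC, hqC⟩ := hpq.exists_pendantConfig_eq (G := G)
        (h.lent_subset p hp) (h.lent_subset q hq)
      exact ⟨q, hq, hpC ▸ hqC ▸ (hC.map (toAddPendant G x)).add_right hD⟩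

theorem evcOn_le [Fintype V] (h : RootedStrategy G Finset.univ x a T) : evcOn G {x} ≤ a + 2 := by
  refine Nat.sInf_le ⟨{C | (C, ∅) ∈ T}, ⟨?_, fun C hC => ⟨?_, ?_⟩, fun C hC u v huv => ?_⟩,
    fun C hC s hs => ?_⟩
  · obtain ⟨p, hp⟩ := h.nonempty
    obtain ⟨⟨C, _⟩, hC, rfl, -⟩ := h.reclaim p hp
    exact ⟨C, hC⟩
  · simpa using h.card_add_card _ hC
  · exact fun u v huv => h.cover _ hC u (Finset.mem_univ u) v (Finset.mem_univ v) huv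
  · obtain ⟨⟨C', _⟩, hC', rfl, hdef⟩ :=
      h.defend_of_not_lent _ hC rfl u (Finset.mem_univ u) v (Finset.mem_univ v) huv
    exact ⟨C', hC', hdef.of_lent_eq rfl⟩
  · exact h.port_mem _ hC s (Finset.mem_singleton.2 hs)

end RootedStrategy

end UpperBound

/-! ### Guards on a component of an extension -/

section Extension

variable {W : Type} {G : SimpleGraph V} {G' : SimpleGraph W}

lemma Defends.countP_lt {C C' : Multiset V} {z w : V} (h : Defends G z w C C') {P : V → Prop}
    [DecidablePred P] (hz : P z) (hw : ¬ P w)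
    (hout : ∀ c ∈ C, ¬ P c → ∀ d, G.Adj c d → ¬ P d) : C'.countP P < C.countP P := by
  obtain ⟨M, ⟨rfl, rfl, hM⟩, hzw⟩ := h
  have hstay : ∀ p ∈ M, P p.2 → P p.1 := by
    intro p hp hp2
    rcases hM p hp with heq | hadj
    · exact heq ▸ hp2
    · by_contra hp1
      exact hout p.1 (Multiset.mem_map_of_mem _ hp) hp1 p.2 hadj hp2
  obtain ⟨N, rfl⟩ := Multiset.exists_cons_of_mem (hzw.resolve_right fun h => hw (hstay _ h hz))
  have hle : (N.map Prod.snd).countP P ≤ (N.map Prod.fst).countP P := by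
    rw [Multiset.countP_map, Multiset.countP_map,
      Multiset.filter_congr (q := fun p => P p.1 ∧ P p.2) fun p hp =>
        ⟨fun h => ⟨hstay p (Multiset.mem_cons_of_mem hp) h, h⟩, And.right⟩]
    exact Multiset.card_le_card (Multiset.monotone_filter_right N fun _ h => h.1)
  rw [Multiset.map_cons, Multiset.map_cons, Multiset.countP_cons_of_neg _ hw,
    Multiset.countP_cons_of_pos _ hz]
  exact Nat.lt_succ_of_le hle

lemma sum_count_eq_countP [DecidableEq V] (Y : Finset V) (C : Multiset V) :
    ∑ y ∈ Y, C.count y = C.countP (· ∈ Y) := by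
  rw [Multiset.countP_eq_card_filter, ← Multiset.sum_count_eq_card (s := Y) (by simp)]
  exact Finset.sum_congr rfl fun y hy => (Multiset.count_filter_of_pos hy).symm

lemma sum_count_eq_countP_map [DecidableEq W] (f : V ↪ W) (Y : Finset V) (C : Multiset W) :
    ∑ y ∈ Y, C.count (f y) = C.countP (· ∈ Y.map f) := by
  rw [← sum_count_eq_countP, Finset.sum_map]

lemma mem_xCompSet_of_adj {x v w : V} {H : (delVert G x).ConnectedComponent}
    (hv : v ∈ xCompSet G x H) (hvx : v ≠ x) (h : G.Adj v w) : w ∈ xCompSet G x H := by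
  rcases eq_or_ne w x with rfl | hwx
  · exact x_mem_xCompSet G _ H
  obtain ⟨v, hvH, rfl⟩ := hv.resolve_left hvx
  have hadj : (delVert G x).Adj v ⟨w, hwx⟩ := h
  exact .inr ⟨⟨w, hwx⟩, H.mem_supp_of_adj_mem_supp hvH hadj, rfl⟩

lemma exists_mem_xCompSet_ne (x : V) (H : (delVert G x).ConnectedComponent) :
    ∃ v ∈ xCompSet G x H, v ≠ x :=
  let ⟨y, hy⟩ := H.nonempty_supp
  ⟨y, .inr ⟨y, hy, rfl⟩, y.2⟩

theorem IsDefense.defenseCounts [DecidableEq W] {x : V} (f : G ↪g G')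
    (hf : ∀ v ≠ x, ∀ w, G'.Adj (f v) w → w ∈ Set.range f) {k : ℕ} {F : Set (Multiset W)}
    (hF : IsDefense G' k F) : DefenseCounts G x ((fun C v => C.count (f v)) '' F) where
  nonempty := hF.1.image _
  cover := by
    rintro _ ⟨C, hC, rfl⟩ u v huv
    exact ((hF.2.1 C hC).2 (f.map_adj_iff.2 huv)).imp Multiset.one_le_count_iff_mem.2
      Multiset.one_le_count_iff_mem.2
  exists_sum_lt := by
    rintro _ ⟨C, hC, rfl⟩ Y hxY z hz w hw hzw hout
    obtain ⟨C', hC', hdef⟩ := hF.2.2 C hC _ _ (f.map_adj_iff.2 hzw)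
    refine ⟨_, ⟨C', hC', rfl⟩, ?_⟩
    have hmem : ∀ v, f v ∈ Y.map f.toEmbedding ↔ v ∈ Y := fun v => Finset.mem_map' _
    have hlt := Defends.countP_lt hdef (P := (· ∈ Y.map f.toEmbedding)) ((hmem z).2 hz)
      (fun h => hw ((hmem w).1 h)) ?_
    · rwa [← sum_count_eq_countP_map, ← sum_count_eq_countP_map] at hlt
    intro c hc hcY d hcd hdY
    obtain ⟨y, hy, rfl⟩ := Finset.mem_map.1 hdY
    obtain ⟨u, rfl⟩ := hf y (fun h => hxY (h ▸ hy)) c hcd.symm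
    rcases hout y hy u (f.map_adj_iff.1 hcd.symm) with hu | hu
    · exact hcY ((hmem u).2 hu)
    · exact Multiset.count_eq_zero.1 hu hc

lemma guardsOn_eq_sum_count [Fintype V] [DecidableEq W] (f : V ↪ W) {S : Set W}
    (hf : Set.range f = S) (C : Multiset W) : guardsOn C S = ∑ v, C.count (f v) := by
  classical
  rw [sum_count_eq_countP_map, guardsOn, Multiset.countP_eq_card_filter]
  exact congrArg Multiset.card (Multiset.filter_congr fun v _ => by simp [← hf])

lemma range_induce_comp_iso {S : Set W} (φ : G ≃g G'.induce S) :
    Set.range ((Embedding.induce S).comp φ.toEmbedding) = S := by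
  ext w
  refine ⟨fun ⟨v, hv⟩ => hv ▸ (φ v).2, fun hw => ⟨φ.symm ⟨w, hw⟩, ?_⟩⟩
  exact congrArg Subtype.val (φ.apply_symm_apply ⟨w, hw⟩)

end Extension

theorem blocks_substructure_general {V : Type} [Finite V] [DecidableEq V] {G : SimpleGraph V}
    (hG : G.Connected)
    (hopt : ∀ B X : Finset V, IsBlock G B → B.Nontrivial → ∀ x ∈ X, X ⊆ B →
      HasOptimalStrategy G B X x) : SubstructureProperty G := by
  classical
  intro x _ V' _ G' x' _ _ H φ hφ C ⟨k, F, hF, hC⟩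
  have := Fintype.ofFinite V
  let f : G ↪g G' := (Embedding.induce _).comp φ.toEmbedding
  have hrange : Set.range f = xCompSet G' x' H := range_induce_comp_iso φ
  have hfx : f x = x' := hφ
  have hcounts := hF.defenseCounts (x := x) f fun v hvx w hvw =>
    hrange ▸ mem_xCompSet_of_adj (φ v).2 (fun h => hvx (f.injective (h.trans hfx.symm))) hvw
  have hbranch : IsBranch G x Finset.univ x := ⟨by simp, by simp, fun _ => rfl⟩
  have hne : Finset.univ ≠ {x} := fun huniv => by
    obtain ⟨y, hy, hyx⟩ := exists_mem_xCompSet_ne x' H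
    obtain ⟨v, rfl⟩ := hrange ▸ hy
    exact hyx (Finset.mem_singleton.1 (huniv ▸ Finset.mem_univ v) ▸ hfx)
  obtain ⟨a, T, hT, ha⟩ := hcounts.exists_rootedStrategy hG hopt hbranch
  have hlower : a < guardsOn C (xCompSet G' x' H) :=
    guardsOn_eq_sum_count f.toEmbedding hrange C ▸ hcounts.lt_sum hG hbranch hne ha _ ⟨C, hC, rfl⟩
  have hupper := hT.evcOn_le
  have hpendant := hT.evc_addPendant_le
  exact ⟨fun _ => by omega, fun _ => by omega⟩

/-- Every finite simple connected graph in which each block is a cycle, a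
single edge, or a biconnected chordal graph satisfies the substructure property. -/
theorem blocks_substructure (V : Type) [Finite V] (G : SimpleGraph V)
    (hG : G.Connected)
    (hblocks : ∀ S : Set V, IsBlock G S →
      IsCycleSet G S ∨ (∃ u w : V, G.Adj u w ∧ S = {u, w}) ∨
      (IsChordal (G.induce S) ∧ IsBiconnected (G.induce S))) :
    SubstructureProperty G := by
  classical
  exact blocks_substructure_general hG fun B _ hB hBnt _ =>
    hB.hasOptimalStrategy (hblocks B hB) hBnt

end EVC
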